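/- Let (Ω, μ) be a probability space, T : Ω → Ω an ergodic measure-preserving transformation, and A : Ω → GL(d, ℝ) a measurable linear cocycle with ∫_Ω log⁺‖A(ω)‖ dμ(ω) < ∞. Then at least one of the following holds: (1) there exists λ ∈ ℝ ∪ {−∞} such that for μ-a.e. ω ∈ Ω and every nonzero v ∈ ℝ^d, lim_{N→∞} (1/N) log ‖A^N(ω) v‖ = λ, and for fixed ω the convergence is uniform over all v with ‖v‖ = 1; or (2) there exists a measurable assignment, defined for μ-a.e. ω, of a linear subspace E(ω) ⊂ ℝ^d with 0 < dim E(ω) < d and A(ω) E(ω) = E(Tω) for μ-a.e. ω. -/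

import Mathlib

open MeasureTheory Filter Topology

/-- The operator norm of a square real matrix, with respect to Euclidean norms. -/
noncomputable def matOpNorm {d : ℕ} (M : Matrix (Fin d) (Fin d) ℝ) : ℝ :=
  ‖Matrix.toEuclideanCLM (𝕜 := ℝ) M‖

/-- The cocycle iterates `A^N(ω) = A(T^{N-1} ω) ⋯ A(T ω) A(ω)`. -/
noncomputable def cocycIter {Ω : Type*} {d : ℕ} (T : Ω → Ω)
    (A : Ω → Matrix (Fin d) (Fin d) ℝ) : ℕ → Ω → Matrix (Fin d) (Fin d) ℝ
  | 0, _ => 1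
  | n + 1, ω => cocycIter T A n (T ω) * A ω

section Kingman

/-- A subadditive process that returns below zero within `M` steps from every time in `G` is
bounded by the costs paid at times outside `G` and at the last `M` times. -/
theorem subadditive_le_sum_exceptional {φ : ℕ → ℕ → ℝ} {b : ℕ → ℝ} {G : Set ℕ} {M : ℕ}
    [DecidablePred (· ∈ G)]
    (hsub : ∀ i m n, 0 < m → 0 < n → φ i (m + n) ≤ φ i m + φ (i + m) n)
    (hb : ∀ i, 0 ≤ b i) (h1 : ∀ i, φ i 1 ≤ b i)
    (hG : ∀ i ∈ G, ∃ n, 0 < n ∧ n ≤ M ∧ φ i n ≤ 0) (N : ℕ) (hN : 0 < N) (i : ℕ) :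
    φ i N ≤ ∑ j ∈ Finset.range N, if i + j ∉ G ∨ N ≤ j + M then b (i + j) else 0 := by
  have hterm : ∀ (N i j : ℕ), 0 ≤ if i + j ∉ G ∨ N ≤ j + M then b (i + j) else 0 := by
    intro N i j; split_ifs <;> simp [hb]
  have hsum : ∀ N i, 0 < N → φ i N ≤ ∑ j ∈ Finset.range N, b (i + j) := by
    intro N
    induction N with
    | zero => simp
    | succ N ih =>
      intro i _
      rcases Nat.eq_zero_or_pos N with rfl | hN
      · simpa using h1 i
      · rw [Finset.sum_range_succ]
        have := ih i hN
        have := hsub i N 1 hN one_pos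
        have := h1 (i + N)
        linarith
  induction N using Nat.strong_induction_on generalizing i with
  | _ N ih =>
  have hstep : ∀ m, 0 < m → m < N → φ i m ≤ (∑ j ∈ Finset.range m,
      if i + j ∉ G ∨ N ≤ j + M then b (i + j) else 0) →
      φ i N ≤ ∑ j ∈ Finset.range N, if i + j ∉ G ∨ N ≤ j + M then b (i + j) else 0 := by
    intro m hm hmN hle
    obtain ⟨n, rfl⟩ := Nat.exists_eq_add_of_lt hmN
    rw [add_assoc m n 1, Finset.sum_range_add]
    have h2 := ih (n + 1) (by omega) (by omega) (i + m)
    have h3 := hsub i m (n + 1) hm (by omega)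
    have h4 : ∀ j, (m + n + 1 ≤ m + j + M) ↔ (n + 1 ≤ j + M) := fun j => by omega
    simp only [h4, ← add_assoc] at h2 h3 hle ⊢
    linarith
  by_cases hi : i ∈ G
  · obtain ⟨n, hn, hnM, hle⟩ := hG i hi
    rcases lt_trichotomy n N with h | rfl | h
    · exact hstep n hn h (hle.trans (Finset.sum_nonneg fun j _ => hterm _ _ _))
    · exact hle.trans (Finset.sum_nonneg fun j _ => hterm _ _ _)
    · refine (hsum N i hN).trans (Finset.sum_le_sum fun j _ => ?_)
      rw [if_pos (Or.inr (by omega))]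
  · rcases Nat.lt_or_ge 1 N with h | h
    · exact hstep 1 one_pos h (by simpa [hi] using h1 i)
    · obtain rfl : N = 1 := by omega
      simpa [hi] using h1 i

variable {Ω : Type*} [MeasurableSpace Ω] {μ : Measure Ω} {T : Ω → Ω}

theorem ae_frequently_lt_or_ae_eventually_le [IsFiniteMeasure μ] (hT : Ergodic T μ) {g : ℕ → Ω → ℝ}
    (hg : ∀ n, Measurable (g n)) (hstep : ∀ n ω, 0 < n → g (n + 1) ω ≤ g 1 ω + g n (T ω))
    {q r : ℝ} (hqr : q < r) :
    (∀ᵐ ω ∂μ, ∃ᶠ n : ℕ in atTop, g n ω < r * n) ∨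
      (∀ᵐ ω ∂μ, ∀ᶠ n : ℕ in atTop, q * n ≤ g n ω) := by
  let D : Set Ω := {ω | ∀ k : ℕ, ∃ᶠ n : ℕ in atTop, g n ω < (q + 1 / (k + 1)) * n}
  have hD : MeasurableSet D := by
    simp only [D, frequently_atTop, Set.ofPred_forall, Set.ofPred_exists]
    refine MeasurableSet.iInter fun k => MeasurableSet.iInter fun a => MeasurableSet.iUnion
      fun b => ?_
    by_cases h : a ≤ b
    · simpa [h] using measurableSet_lt (hg b) measurable_const
    · simp [h]
  have hinv : T ⁻¹' D ⊆ D := by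
    intro ω hω k
    have h1 := hω (k + 1)
    have hlt : (1 : ℝ) / ((k + 1 : ℕ) + 1) < 1 / (k + 1) := by
      push_cast
      exact one_div_lt_one_div_of_lt (by positivity) (by linarith)
    have hev : ∀ᶠ n : ℕ in atTop, g 1 ω - (q + 1 / (k + 1)) ≤
        (1 / (k + 1) - 1 / ((k + 1 : ℕ) + 1)) * (n : ℝ) :=
      (tendsto_natCast_atTop_atTop.const_mul_atTop (sub_pos.2 hlt)).eventually_ge_atTop _
    have h2 := (h1.and_eventually hev).and_eventually (eventually_gt_atTop 0)
    have h3 : ∃ᶠ n : ℕ in atTop, g (n + 1) ω < (q + 1 / (k + 1)) * ((n + 1 : ℕ) : ℝ) := by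
      refine h2.mono ?_
      rintro n ⟨⟨ha, hb⟩, hc⟩
      have := hstep n ω hc
      push_cast at ha hb ⊢
      nlinarith
    exact (tendsto_add_atTop_nat 1).frequently h3
  rcases hT.ae_empty_or_univ_of_preimage_ae_le hD.nullMeasurableSet
    (LE.le.eventuallyLE hinv) with h | h
  · right
    filter_upwards [h] with ω hω
    have hω' : ω ∉ D := fun h' => Set.notMem_empty ω (hω.mp h')
    simp only [D, Set.mem_ofPred_eq, not_forall, not_frequently, not_lt] at hω'
    obtain ⟨k, hk⟩ := hω'
    filter_upwards [hk] with n hn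
    refine le_trans ?_ hn
    gcongr
    simp only [le_add_iff_nonneg_right]; positivity
  · left
    obtain ⟨k, hk⟩ := exists_nat_one_div_lt (sub_pos.2 hqr)
    filter_upwards [h] with ω hω
    have hω' : ω ∈ D := hω.mpr trivial
    refine (hω' k).mono fun n hn => hn.trans_le ?_
    gcongr
    linarith

theorem sum_last_le {b : ℕ → ℝ} {N M : ℕ} {K : ℝ} (hK : 0 ≤ K) (hb : ∀ j < N, b j ≤ K) :
    ∑ j ∈ Finset.range N, (if N ≤ j + M then b j else 0) ≤ M * K := by
  rw [← Finset.sum_filter]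
  have hcard : ((Finset.range N).filter fun j => N ≤ j + M).card ≤ M := by
    refine (Finset.card_le_card (t := Finset.Ico (N - M) N) fun j hj => ?_).trans ?_
    · simp only [Finset.mem_filter, Finset.mem_range, Finset.mem_Ico] at hj ⊢
      omega
    · rw [Nat.card_Ico]
      omega
  refine (Finset.sum_le_card_nsmul _ _ K fun j hj => hb j (by simp at hj; exact hj.1)).trans ?_
  rw [nsmul_eq_mul]
  gcongr

theorem sum_ite_or_le {b : ℕ → ℝ} (hb : ∀ j, 0 ≤ b j) (P Q : ℕ → Prop) [DecidablePred P]
    [DecidablePred Q] (N : ℕ) :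
    ∑ j ∈ Finset.range N, (if P j ∨ Q j then b j else 0) ≤
      ∑ j ∈ Finset.range N, (if P j then b j else 0) +
        ∑ j ∈ Finset.range N, (if Q j then b j else 0) := by
  rw [← Finset.sum_add_distrib]
  refine Finset.sum_le_sum fun j _ => ?_
  have := hb j
  by_cases hP : P j <;> by_cases hQ : Q j <;> simp [hP, hQ, this]

theorem MeasureTheory.MeasurePreserving.integral_birkhoffSum (hT : MeasurePreserving T μ μ)
    {h : Ω → ℝ} (hi : Integrable h μ) (N : ℕ) :
    Integrable (birkhoffSum T h N) μ ∧ ∫ ω, birkhoffSum T h N ω ∂μ = N * ∫ ω, h ω ∂μ := by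
  have hj : ∀ j, Integrable (fun ω => h (T^[j] ω)) μ := fun j =>
    (hT.iterate j).integrable_comp_of_integrable hi
  have he : ∀ j, ∫ ω, h (T^[j] ω) ∂μ = ∫ ω, h ω ∂μ := fun j => by
    have hmp := hT.iterate j
    conv_rhs => rw [← hmp.map_eq]
    rw [integral_map hmp.measurable.aemeasurable (by rw [hmp.map_eq]; exact hi.1)]
  refine ⟨integrable_finsetSum _ fun j _ => hj j, ?_⟩
  simp only [birkhoffSum]
  rw [integral_finsetSum _ fun j _ => hj j]
  simp [he]

theorem tendsto_integral_indicator_zero {s : ℕ → Set Ω} (hs : ∀ n, MeasurableSet (s n))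
    {f : Ω → ℝ} (hf : Integrable f μ) (h : ∀ᵐ ω ∂μ, ∀ᶠ n in atTop, ω ∉ s n) :
    Tendsto (fun n => ∫ ω, (s n).indicator f ω ∂μ) atTop (𝓝 0) := by
  have := tendsto_integral_of_dominated_convergence (μ := μ) (F := fun n => (s n).indicator f)
    (f := fun _ => 0) (fun ω => ‖f ω‖) (fun n => (hf.indicator (hs n)).1) hf.norm
    (fun n => .of_forall fun ω => norm_indicator_le_norm_self f ω) ?_
  · simpa using this
  · filter_upwards [h] with ω hω
    refine tendsto_const_nhds.congr' ?_
    filter_upwards [hω] with n hn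
    simp [hn]

/-- If the process drops below zero at some positive time almost surely, the set of points where
this takes more than `M` steps eventually excludes almost every point. -/
theorem ae_eventually_notMem_of_frequently {p : ℕ → Ω → Prop}
    (h : ∀ᵐ ω ∂μ, ∃ᶠ n in atTop, p n ω) :
    ∀ᵐ ω ∂μ, ∀ᶠ M : ℕ in atTop, ω ∉ {ω | ∃ n, 0 < n ∧ n ≤ M ∧ p n ω}ᶜ := by
  filter_upwards [h] with ω hω
  obtain ⟨n, hn, hn0⟩ := (hω.and_eventually (eventually_gt_atTop 0)).exists
  filter_upwards [eventually_ge_atTop n] with M hM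
  exact fun hc => hc ⟨n, hn0, hM, hn⟩

theorem measurableSet_exists_le {p : ℕ → Ω → Prop} (hp : ∀ n, MeasurableSet {ω | p n ω}) (M : ℕ) :
    MeasurableSet {ω | ∃ n, 0 < n ∧ n ≤ M ∧ p n ω} := by
  simp only [Set.ofPred_exists]
  refine MeasurableSet.iUnion fun n => ?_
  by_cases h : 0 < n ∧ n ≤ M
  · simpa [h.1, h.2] using hp n
  · convert MeasurableSet.empty (α := Ω) using 1
    ext ω
    simp only [Set.mem_ofPred_eq, Set.mem_empty_iff_false, iff_false]
    tauto

theorem measurable_birkhoffSum (hT : Measurable T) {h : Ω → ℝ} (hh : Measurable h) (n : ℕ) :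
    Measurable (birkhoffSum T h n) :=
  Finset.measurable_fun_sum _ fun j _ => hh.comp (hT.iterate j)

/-- Upper half of the pointwise ergodic theorem for a nonnegative function. -/
theorem Ergodic.ae_eventually_birkhoffSum_le [IsProbabilityMeasure μ] (hT : Ergodic T μ)
    {h : Ω → ℝ} (hm : Measurable h) (hi : Integrable h μ) (h0 : ∀ ω, 0 ≤ h ω) {q : ℝ}
    (hq : ∫ ω, h ω ∂μ < q) :
    ∀ᵐ ω ∂μ, ∀ᶠ n : ℕ in atTop, birkhoffSum T h n ω ≤ q * n := by
  classical
  obtain ⟨r, hr, hrq⟩ := exists_between hq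
  have hr0 : 0 < r := (integral_nonneg h0).trans_lt hr
  have hmS := measurable_birkhoffSum hT.measurable hm
  rcases ae_frequently_lt_or_ae_eventually_le hT (g := fun n ω => -birkhoffSum T h n ω)
    (fun n => (hmS n).neg)
    (fun n ω _ => by simp [birkhoffSum_succ']) (neg_lt_neg hrq) with hfr | hev
  · exfalso
    let B : ℕ → Set Ω := fun M =>
      {ω | ∃ n, 0 < n ∧ n ≤ M ∧ -birkhoffSum T h n ω < -r * n}
    have hB : ∀ M, MeasurableSet (B M) := measurableSet_exists_le fun n =>
      measurableSet_lt (hmS n).neg measurable_const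
    have hlim := tendsto_integral_indicator_zero (μ := μ) (fun M => (hB M).compl)
      (integrable_const r) (ae_eventually_notMem_of_frequently hfr)
    obtain ⟨M, hM⟩ := (hlim.eventually_lt_const (sub_pos.2 hr)).exists
    set h2 : Ω → ℝ := (B M)ᶜ.indicator fun _ => r
    have hi2 : Integrable h2 μ := (integrable_const r).indicator (hB M).compl
    have key : ∀ N : ℕ, 0 < N → ∀ ω, r * N - M * r ≤ birkhoffSum T (h + h2) N ω := by
      intro N hN ω
      have hj := subadditive_le_sum_exceptional
        (φ := fun i n => r * n - birkhoffSum T h n (T^[i] ω)) (b := fun _ => r)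
        (G := {i | T^[i] ω ∈ B M}) (M := M)
        (fun i m n _ _ => by
          simp only [birkhoffSum_add, ← Function.iterate_add_apply, Nat.add_comm m i]
          push_cast; linarith)
        (fun _ => hr0.le) (fun i => by simpa using h0 _)
        (fun i hi => by
          obtain ⟨n, hn, hnM, hlt⟩ := hi
          exact ⟨n, hn, hnM, by linarith⟩) N hN 0
      have h3 := hj.trans (sum_ite_or_le (b := fun _ => r) (fun _ => hr0.le) _ _ N)
      have h4 := sum_last_le (b := fun _ => r) (N := N) (M := M) hr0.le fun _ _ => le_rfl
      have h5 : birkhoffSum T (h + h2) N ω = birkhoffSum T h N ω +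
          ∑ j ∈ Finset.range N, if 0 + j ∉ {i | T^[i] ω ∈ B M} then r else 0 := by
        simp only [birkhoffSum, Pi.add_apply, Finset.sum_add_distrib]
        congr 1
        refine Finset.sum_congr rfl fun j _ => ?_
        simp [h2, Set.indicator_apply]
      simp only [Function.iterate_zero, id] at h3
      rw [h5]; linarith
    have hint : ∀ N : ℕ, 0 < N → r * N - M * r ≤ N * ∫ ω, (h + h2) ω ∂μ := by
      intro N hN
      obtain ⟨hI, he⟩ := hT.toMeasurePreserving.integral_birkhoffSum (hi.add hi2) N
      rw [← he]
      simpa using integral_mono (integrable_const (r * N - M * r)) hI (key N hN)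
    have hlt : ∫ ω, (h + h2) ω ∂μ < r := by
      rw [integral_add' hi hi2]; linarith
    obtain ⟨N, hN⟩ := exists_nat_gt (M * r / (r - ∫ ω, (h + h2) ω ∂μ))
    rw [div_lt_iff₀ (sub_pos.2 hlt)] at hN
    have hN0 : 0 < N := by
      rcases Nat.eq_zero_or_pos N with rfl | h
      · simp only [Nat.cast_zero, zero_mul] at hN
        have : 0 ≤ M * r := by positivity
        linarith
      · exact h
    have := hint N hN0
    linarith
  · filter_upwards [hev] with ω hω
    filter_upwards [hω] with n hn
    linarith

theorem Ergodic.ae_eventually_comp_iterate_le [IsProbabilityMeasure μ] (hT : Ergodic T μ)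
    {h : Ω → ℝ} (hm : Measurable h) (hi : Integrable h μ) (h0 : ∀ ω, 0 ≤ h ω) {ε : ℝ}
    (hε : 0 < ε) :
    ∀ᵐ ω ∂μ, ∀ᶠ n : ℕ in atTop, h (T^[n] ω) ≤ ε * n := by
  have hs : ∀ K : ℕ, MeasurableSet {ω | (K : ℝ) < h ω} := fun K =>
    measurableSet_lt measurable_const hm
  have hlim := tendsto_integral_indicator_zero (μ := μ) hs hi (.of_forall fun ω => by
    obtain ⟨K, hK⟩ := exists_nat_ge (h ω)
    filter_upwards [eventually_ge_atTop K] with n hn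
    simp only [not_lt]
    exact hK.trans (by exact_mod_cast hn))
  obtain ⟨K, hK⟩ := (hlim.eventually_lt_const (half_pos hε)).exists
  have hnn : ∀ ω, 0 ≤ {ω | (K : ℝ) < h ω}.indicator h ω := fun ω =>
    Set.indicator_nonneg (fun ω _ => h0 ω) ω
  filter_upwards [hT.ae_eventually_birkhoffSum_le (hm.indicator (hs K)) (hi.indicator (hs K))
    hnn hK] with ω hω
  have hev : ∀ᶠ n : ℕ in atTop, K + ε / 2 ≤ ε / 2 * (n : ℝ) :=
    (tendsto_natCast_atTop_atTop.const_mul_atTop (half_pos hε)).eventually_ge_atTop _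
  filter_upwards [(tendsto_add_atTop_nat 1).eventually hω, hev] with n hn hn2
  rw [birkhoffSum_succ] at hn
  have h1 : 0 ≤ birkhoffSum T ({ω | (K : ℝ) < h ω}.indicator h) n ω :=
    Finset.sum_nonneg fun j _ => hnn _
  have h2 : h (T^[n] ω) ≤ K + {ω | (K : ℝ) < h ω}.indicator h (T^[n] ω) := by
    by_cases hc : (K : ℝ) < h (T^[n] ω)
    · simp [hc]
    · exact (not_lt.1 hc).trans (le_add_of_nonneg_right (hnn _))
  push_cast at hn
  linarith

theorem Ergodic.ae_eventually_le_of_frequently [IsProbabilityMeasure μ] (hT : Ergodic T μ)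
    {g : ℕ → Ω → ℝ} (hg : ∀ n, Measurable (g n))
    (hsub : ∀ m n ω, 0 < m → 0 < n → g (m + n) ω ≤ g m ω + g n (T^[m] ω))
    {h : Ω → ℝ} (hm : Measurable h) (hi : Integrable h μ) (h0 : ∀ ω, 0 ≤ h ω)
    (hgh : ∀ ω, g 1 ω ≤ h ω) {q r : ℝ} (hqr : q < r)
    (hfr : ∀ᵐ ω ∂μ, ∃ᶠ n : ℕ in atTop, g n ω < q * n) :
    ∀ᵐ ω ∂μ, ∀ᶠ n : ℕ in atTop, g n ω ≤ r * n := by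
  classical
  let b : Ω → ℝ := fun ω => h ω + |q|
  have hb0 : ∀ ω, 0 ≤ b ω := fun ω => add_nonneg (h0 ω) (abs_nonneg q)
  have hbm : Measurable b := hm.add_const _
  have hbi : Integrable b μ := hi.add (integrable_const _)
  let B : ℕ → Set Ω := fun M => {ω | ∃ n, 0 < n ∧ n ≤ M ∧ g n ω < q * n}
  have hB : ∀ M, MeasurableSet (B M) := measurableSet_exists_le fun n =>
    measurableSet_lt (hg n) measurable_const
  set δ := (r - q) / 2 with hδ
  have hδ0 : 0 < δ := half_pos (sub_pos.2 hqr)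
  obtain ⟨M, hM⟩ := ((tendsto_integral_indicator_zero (μ := μ) (fun M => (hB M).compl) hbi
    (ae_eventually_notMem_of_frequently hfr)).eventually_lt_const hδ0).exists
  have hη : 0 < δ / (2 * (M + 1)) := by positivity
  filter_upwards [hT.ae_eventually_birkhoffSum_le (hbm.indicator (hB M).compl)
    (hbi.indicator (hB M).compl) (fun ω => Set.indicator_nonneg (fun ω _ => hb0 ω) ω) hM,
    hT.ae_eventually_comp_iterate_le hbm hbi hb0 hη] with ω h1 h2
  obtain ⟨N₀, hN₀⟩ := eventually_atTop.1 h2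
  set K := ∑ j ∈ Finset.range N₀, b (T^[j] ω)
  have hK0 : 0 ≤ K := Finset.sum_nonneg fun j _ => hb0 _
  have hK : ∀ N : ℕ, ∀ j < N, b (T^[j] ω) ≤ K + δ / (2 * (M + 1)) * N := by
    intro N j hj
    have hjN : δ / (2 * (M + 1)) * (j : ℝ) ≤ δ / (2 * (M + 1)) * N := by gcongr
    have hN0' : 0 ≤ δ / (2 * (M + 1)) * (N : ℝ) := by positivity
    rcases lt_or_ge j N₀ with hlt | hge
    · have := Finset.single_le_sum (f := fun j => b (T^[j] ω)) (fun j _ => hb0 _)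
        (Finset.mem_range.2 hlt)
      linarith
    · have := hN₀ j hge
      linarith
  have hev : ∀ᶠ n : ℕ in atTop, M * K ≤ δ / 2 * (n : ℝ) :=
    (tendsto_natCast_atTop_atTop.const_mul_atTop (half_pos hδ0)).eventually_ge_atTop _
  filter_upwards [h1, hev, eventually_gt_atTop 0] with N hN1 hN2 hN
  have hj := subadditive_le_sum_exceptional
    (φ := fun i n => g n (T^[i] ω) - q * n) (b := fun i => b (T^[i] ω))
    (G := {i | T^[i] ω ∈ B M}) (M := M)
    (fun i m n hm hn => by
      have := hsub m n (T^[i] ω) hm hn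
      rw [← Function.iterate_add_apply, Nat.add_comm m i] at this
      push_cast; linarith)
    (fun _ => hb0 _) (fun i => by
      have := hgh (T^[i] ω)
      have := neg_abs_le q
      simp only [b, Nat.cast_one]; linarith)
    (fun i hi => by
      obtain ⟨n, hn, hnM, hlt⟩ := hi
      exact ⟨n, hn, hnM, by linarith⟩) N hN 0
  simp only [zero_add] at hj
  have h3 := hj.trans (sum_ite_or_le (b := fun i => b (T^[i] ω)) (fun _ => hb0 _) _ _ N)
  have h4 := sum_last_le (M := M) (by positivity) (hK N)
  have h5 : birkhoffSum T ((B M)ᶜ.indicator b) N ω =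
      ∑ j ∈ Finset.range N, if j ∉ {i | T^[i] ω ∈ B M} then b (T^[j] ω) else 0 := by
    refine Finset.sum_congr rfl fun j _ => ?_
    simp [Set.indicator_apply]
  have h6 : M * (δ / (2 * (M + 1)) * N) ≤ δ / 2 * N := by
    have : (M : ℝ) * (δ / (2 * (M + 1))) ≤ δ / 2 := by
      rw [← mul_div_assoc, div_le_div_iff₀ (by positivity) (by positivity)]
      nlinarith
    nlinarith [Nat.cast_nonneg (α := ℝ) N]
  simp only [Function.iterate_zero, id] at h3
  have h7 : δ * 2 = r - q := by rw [hδ]; ring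
  nlinarith

/-- Kingman's subadditive ergodic theorem for an ergodic map. -/
theorem Ergodic.exists_ae_tendsto_subadditive [IsProbabilityMeasure μ] (hT : Ergodic T μ)
    {g : ℕ → Ω → ℝ} (hg : ∀ n, Measurable (g n))
    (hsub : ∀ m n ω, 0 < m → 0 < n → g (m + n) ω ≤ g m ω + g n (T^[m] ω))
    {h : Ω → ℝ} (hm : Measurable h) (hi : Integrable h μ) (h0 : ∀ ω, 0 ≤ h ω)
    (hgh : ∀ ω, g 1 ω ≤ h ω) :
    ∃ l : EReal, l ≠ ⊤ ∧ ∀ᵐ ω ∂μ, Tendsto (fun n : ℕ => ((g n ω / n : ℝ) : EReal)) atTop (𝓝 l) := by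
  let S : Set ℝ := {q | ∀ᵐ ω ∂μ, ∀ᶠ n : ℕ in atTop, g n ω ≤ q * n}
  have hSup : ∀ q ∈ S, ∀ r, q ≤ r → r ∈ S := fun q hq r hqr => by
    change ∀ᵐ ω ∂μ, ∀ᶠ n : ℕ in atTop, g n ω ≤ r * n
    filter_upwards [show ∀ᵐ ω ∂μ, ∀ᶠ n : ℕ in atTop, g n ω ≤ q * n from hq] with ω hω
    filter_upwards [hω] with n hn
    exact hn.trans (by gcongr)
  have hne : S.Nonempty := by
    refine ⟨∫ ω, h ω ∂μ + 1, ?_⟩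
    filter_upwards [hT.ae_eventually_birkhoffSum_le hm hi h0 (lt_add_one _)] with ω hω
    filter_upwards [hω, eventually_gt_atTop 0] with n hn hn0
    refine le_trans ?_ hn
    clear hn
    induction n, hn0 using Nat.le_induction with
    | base => simpa using hgh ω
    | succ n hn ih =>
      rw [birkhoffSum_succ]
      exact (hsub n 1 ω hn one_pos).trans (add_le_add ih (hgh _))
  have hlow : ∀ q, q ∉ S → ∀ r < q, ∀ᵐ ω ∂μ, ∀ᶠ n : ℕ in atTop, r * n ≤ g n ω := by
    intro q hq r hr
    obtain ⟨p, hrp, hpq⟩ := exists_between hr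
    refine (ae_frequently_lt_or_ae_eventually_le hT hg
      (fun n ω hn => by simpa [Nat.add_comm] using hsub 1 n ω one_pos hn) hrp).resolve_left ?_
    exact fun hfr => hq (hT.ae_eventually_le_of_frequently hg hsub hm hi h0 hgh hpq hfr)
  set l : EReal := sInf ((fun q : ℝ => (q : EReal)) '' S) with hl
  refine ⟨l, ?_, ?_⟩
  · obtain ⟨q, hq⟩ := hne
    exact ne_top_of_le_ne_top (EReal.coe_ne_top q) (sInf_le ⟨q, hq, rfl⟩)
  · have hup : ∀ᵐ ω ∂μ, ∀ q : ℚ, l < ((q : ℝ) : EReal) → ∀ᶠ n : ℕ in atTop, g n ω ≤ q * n := by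
      rw [ae_all_iff]
      intro q
      by_cases hq : l < ((q : ℝ) : EReal)
      · obtain ⟨_, ⟨p, hp, rfl⟩, hpq⟩ := sInf_lt_iff.1 hq
        simp only [hq, forall_const]
        exact hSup p hp q (EReal.coe_lt_coe_iff.1 hpq).le
      · simp [hq]
    have hdn : ∀ᵐ ω ∂μ, ∀ q : ℚ, ((q : ℝ) : EReal) < l → ∀ᶠ n : ℕ in atTop, q * n ≤ g n ω := by
      rw [ae_all_iff]
      intro q
      by_cases hq : ((q : ℝ) : EReal) < l
      · obtain ⟨p, hqp, hpl⟩ := EReal.lt_iff_exists_real_btwn.1 hq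
        have hpS : p ∉ S := fun hp => (hpl.trans_le (sInf_le ⟨p, hp, rfl⟩)).false
        simpa [hq] using hlow p hpS q (EReal.coe_lt_coe_iff.1 hqp)
      · simp [hq]
    filter_upwards [hup, hdn] with ω h1 h2
    refine tendsto_order.2 ⟨fun a ha => ?_, fun a ha => ?_⟩
    · obtain ⟨q, haq, hql⟩ := EReal.lt_iff_exists_rat_btwn.1 ha
      filter_upwards [h2 q hql, eventually_gt_atTop 0] with n hn hn0
      refine haq.trans_le (EReal.coe_le_coe_iff.2 ?_)
      rwa [le_div_iff₀ (by exact_mod_cast hn0)]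
    · obtain ⟨q, hlq, hqa⟩ := EReal.lt_iff_exists_rat_btwn.1 ha
      filter_upwards [h1 q hlq, eventually_gt_atTop 0] with n hn hn0
      refine lt_of_le_of_lt (EReal.coe_le_coe_iff.2 ?_) hqa
      rwa [div_le_iff₀ (by exact_mod_cast hn0)]

end Kingman

section Minors

variable {d : ℕ}

/-- The sum of the absolute values of all `k × k` minors of a matrix, each being counted once for
every ordering of its rows and columns. -/
noncomputable def minorSum (k : ℕ) (B : Matrix (Fin d) (Fin d) ℝ) : ℝ :=
  ∑ I : Fin k → Fin d, ∑ J : Fin k → Fin d, |(B.submatrix I J).det|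

theorem abs_minor_le_minorSum {k : ℕ} (B : Matrix (Fin d) (Fin d) ℝ) (I J : Fin k → Fin d) :
    |(B.submatrix I J).det| ≤ minorSum k B :=
  (Finset.single_le_sum (f := fun J => |(B.submatrix I J).det|) (fun _ _ => abs_nonneg _)
    (Finset.mem_univ J)).trans
    (Finset.single_le_sum (f := fun I => ∑ J, |(B.submatrix I J).det|)
      (fun _ _ => Finset.sum_nonneg fun _ _ => abs_nonneg _) (Finset.mem_univ I))

theorem minorSum_nonneg (k : ℕ) (B : Matrix (Fin d) (Fin d) ℝ) : 0 ≤ minorSum k B :=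
  Finset.sum_nonneg fun _ _ => Finset.sum_nonneg fun _ _ => abs_nonneg _

/-- The Cauchy–Binet formula, summed over all functions instead of increasing ones. -/
theorem factorial_mul_det_submatrix_mul {k : ℕ} (A B : Matrix (Fin d) (Fin d) ℝ)
    (I J : Fin k → Fin d) :
    (k.factorial : ℝ) * ((A * B).submatrix I J).det =
      ∑ K : Fin k → Fin d, (A.submatrix I K).det * (B.submatrix K J).det := by
  have h1 : ((A * B).submatrix I J).det =
      ∑ K : Fin k → Fin d, (A.submatrix I K).det * ∏ i, B (K i) (J i) := by
    simp only [Matrix.det_apply', Matrix.submatrix_apply, Matrix.mul_apply, Finset.prod_univ_sum,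
      Fintype.piFinset_univ, Finset.mul_sum, Finset.sum_mul, Finset.prod_mul_distrib]
    rw [Finset.sum_comm]
    simp only [mul_assoc]
  have h2 : ∀ τ : Equiv.Perm (Fin k), ((A * B).submatrix I J).det =
      ∑ K : Fin k → Fin d, (A.submatrix I K).det *
        (((τ.sign : ℤ) : ℝ) * ∏ i, B (K (τ i)) (J i)) := by
    intro τ
    rw [h1, ← Equiv.sum_comp (Equiv.arrowCongr τ.symm (Equiv.refl (Fin d)))]
    refine Finset.sum_congr rfl fun K _ => ?_
    have : (A.submatrix I (K ∘ τ)).det = ((τ.sign : ℤ) : ℝ) * (A.submatrix I K).det := by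
      rw [← Matrix.det_permute' τ]; rfl
    have hK : (Equiv.arrowCongr τ.symm (Equiv.refl (Fin d))) K = K ∘ τ := by
      ext; simp
    rw [hK, this]
    simp only [Function.comp]
    ring
  have h3 : ∑ τ : Equiv.Perm (Fin k), ((A * B).submatrix I J).det =
      (k.factorial : ℝ) * ((A * B).submatrix I J).det := by
    simp [Fintype.card_perm]
  rw [← h3, Finset.sum_congr rfl fun τ _ => h2 τ, Finset.sum_comm]
  refine Finset.sum_congr rfl fun K _ => ?_
  rw [← Finset.mul_sum, Matrix.det_apply' (B.submatrix K J)]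
  simp

theorem minorSum_mul_le (k : ℕ) (A B : Matrix (Fin d) (Fin d) ℝ) :
    minorSum k (A * B) ≤ minorSum k A * minorSum k B := by
  have h1 : ∀ I J : Fin k → Fin d, |((A * B).submatrix I J).det| ≤
      ∑ K : Fin k → Fin d, |(A.submatrix I K).det| * |(B.submatrix K J).det| := by
    intro I J
    have hk : (1 : ℝ) ≤ k.factorial := by exact_mod_cast Nat.one_le_iff_ne_zero.2 k.factorial_ne_zero
    calc |((A * B).submatrix I J).det|
        ≤ k.factorial * |((A * B).submatrix I J).det| := le_mul_of_one_le_left (abs_nonneg _) hk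
      _ = |(k.factorial : ℝ) * ((A * B).submatrix I J).det| := by rw [abs_mul, Nat.abs_cast]
      _ ≤ _ := by
          rw [factorial_mul_det_submatrix_mul]
          refine (Finset.abs_sum_le_sum_abs _ _).trans_eq ?_
          simp [abs_mul]
  calc minorSum k (A * B)
      ≤ ∑ I : Fin k → Fin d, ∑ J : Fin k → Fin d, ∑ K : Fin k → Fin d,
          |(A.submatrix I K).det| * |(B.submatrix K J).det| :=
        Finset.sum_le_sum fun I _ => Finset.sum_le_sum fun J _ => h1 I J
    _ ≤ ∑ I : Fin k → Fin d, ∑ K : Fin k → Fin d, |(A.submatrix I K).det| * minorSum k B := by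
        refine Finset.sum_le_sum fun I _ => ?_
        rw [Finset.sum_comm]
        refine Finset.sum_le_sum fun K _ => ?_
        rw [← Finset.mul_sum]
        refine mul_le_mul_of_nonneg_left ?_ (abs_nonneg _)
        exact Finset.single_le_sum (f := fun K => ∑ J, |(B.submatrix K J).det|)
          (fun _ _ => Finset.sum_nonneg fun _ _ => abs_nonneg _) (Finset.mem_univ K)
    _ = minorSum k A * minorSum k B := by simp only [minorSum, Finset.sum_mul]

theorem minorSum_one (B : Matrix (Fin d) (Fin d) ℝ) :
    minorSum 1 B = ∑ i, ∑ j, |B i j| := by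
  unfold minorSum
  rw [← (Equiv.funUnique (Fin 1) (Fin d)).sum_comp]
  refine Finset.sum_congr rfl fun I _ => ?_
  rw [← (Equiv.funUnique (Fin 1) (Fin d)).sum_comp]
  refine Finset.sum_congr rfl fun J _ => ?_
  simp [Matrix.det_unique]

theorem abs_apply_le_minorSum_one (B : Matrix (Fin d) (Fin d) ℝ) (i j : Fin d) :
    |B i j| ≤ minorSum 1 B := by
  simpa [Matrix.det_unique] using abs_minor_le_minorSum B (fun _ : Fin 1 => i) (fun _ => j)

theorem norm_mulVec_le_minorSum_one (B : Matrix (Fin d) (Fin d) ℝ) (u : Fin d → ℝ) :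
    ‖B.mulVec u‖ ≤ minorSum 1 B * ‖u‖ := by
  refine (pi_norm_le_iff_of_nonneg (mul_nonneg (minorSum_nonneg _ _) (norm_nonneg _))).2
    fun i => ?_
  rw [minorSum_one, Matrix.mulVec, dotProduct]
  calc ‖∑ j, B i j * u j‖ ≤ ∑ j, |B i j| * ‖u‖ := by
        refine (norm_sum_le _ _).trans (Finset.sum_le_sum fun j _ => ?_)
        rw [norm_mul, Real.norm_eq_abs]
        gcongr
        exact norm_le_pi_norm u j
    _ = (∑ j, |B i j|) * ‖u‖ := by rw [Finset.sum_mul]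
    _ ≤ _ := by
        refine mul_le_mul_of_nonneg_right ?_ (norm_nonneg _)
        exact Finset.single_le_sum (f := fun i => ∑ j, |B i j|)
          (fun _ _ => Finset.sum_nonneg fun _ _ => abs_nonneg _) (Finset.mem_univ i)

theorem minorSum_le_pow (d k : ℕ) : ∃ C : ℝ, 1 ≤ C ∧ ∀ B : Matrix (Fin d) (Fin d) ℝ,
    minorSum k B ≤ C * minorSum 1 B ^ k := by
  refine ⟨max 1 (((d ^ k : ℕ) : ℝ) * ((d ^ k : ℕ) : ℝ) * k.factorial), le_max_left _ _, fun B => ?_⟩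
  have h1 : ∀ I J : Fin k → Fin d, |(B.submatrix I J).det| ≤ k.factorial * minorSum 1 B ^ k := by
    intro I J
    have := Matrix.det_le (A := B.submatrix I J) (abv := AbsoluteValue.abs)
      (x := minorSum 1 B) (fun i j => abs_apply_le_minorSum_one B _ _)
    simpa using this
  calc minorSum k B ≤ ∑ I : Fin k → Fin d, ∑ J : Fin k → Fin d,
        (k.factorial : ℝ) * minorSum 1 B ^ k :=
        Finset.sum_le_sum fun I _ => Finset.sum_le_sum fun J _ => h1 I J
    _ = ((d ^ k : ℕ) : ℝ) * ((d ^ k : ℕ) : ℝ) * k.factorial * minorSum 1 B ^ k := by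
        simp only [Finset.sum_const, Finset.card_univ, Fintype.card_fun, Fintype.card_fin,
          nsmul_eq_mul]
        ring
    _ ≤ _ := by
        have := minorSum_nonneg 1 B
        gcongr
        exact le_max_right _ _

theorem minorSum_pos {k : ℕ} (hk : k ≤ d) {B : Matrix (Fin d) (Fin d) ℝ} (hB : IsUnit B) :
    0 < minorSum k B := by
  obtain ⟨U, rfl⟩ := hB
  refine (minorSum_nonneg k _).lt_of_ne' fun h0 => ?_
  have h1 := minorSum_mul_le k (U : Matrix (Fin d) (Fin d) ℝ) (↑U⁻¹)
  rw [h0, zero_mul, Units.mul_inv] at h1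
  have h2 := abs_minor_le_minorSum (1 : Matrix (Fin d) (Fin d) ℝ) (Fin.castLE hk) (Fin.castLE hk)
  rw [Matrix.submatrix_one _ (Fin.castLE_injective hk), Matrix.det_one, abs_one] at h2
  linarith

theorem minorSum_eq_zero_of_lt {k : ℕ} (hk : d < k) (B : Matrix (Fin d) (Fin d) ℝ) :
    minorSum k B = 0 := by
  refine Finset.sum_eq_zero fun I _ => Finset.sum_eq_zero fun J _ => ?_
  obtain ⟨a, b, hab, hJ⟩ := Fintype.exists_ne_map_eq_of_card_lt J (by simpa using hk)
  rw [Matrix.det_zero_of_column_eq hab (fun r => by simp [hJ]), abs_zero]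

theorem exists_minorSum_le_abs_minor {k : ℕ} {B : Matrix (Fin d) (Fin d) ℝ}
    (hB : 0 < minorSum k B) : ∃ I J : Fin k → Fin d,
    minorSum k B ≤ (((d ^ k : ℕ) : ℝ) * ((d ^ k : ℕ) : ℝ)) * |(B.submatrix I J).det| := by
  have hne : Nonempty (Fin k → Fin d) := by
    by_contra h
    rw [not_nonempty_iff] at h
    simp [minorSum] at hB
  obtain ⟨p, _, hp⟩ := Finset.exists_max_image
    (Finset.univ : Finset ((Fin k → Fin d) × (Fin k → Fin d)))
    (fun p => |(B.submatrix p.1 p.2).det|) Finset.univ_nonempty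
  refine ⟨p.1, p.2, ?_⟩
  calc minorSum k B ≤ ∑ I : Fin k → Fin d, ∑ J : Fin k → Fin d, |(B.submatrix p.1 p.2).det| :=
        Finset.sum_le_sum fun I _ => Finset.sum_le_sum fun J _ => hp (I, J) (Finset.mem_univ _)
    _ = _ := by
        simp only [Finset.sum_const, Finset.card_univ, Fintype.card_fun, Fintype.card_fin,
          nsmul_eq_mul]
        ring

/-- If `B e` vanishes on the rows `I`, its remaining entries are controlled by bordered minors. -/
theorem mulVec_mul_det_eq_sum {k : ℕ} (B : Matrix (Fin d) (Fin d) ℝ) (I J : Fin k → Fin d)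
    {e : Fin d → ℝ} (he : ∀ a, B.mulVec e (I a) = 0) (i : Fin d) :
    B.mulVec e i * (B.submatrix I J).det =
      ∑ j, e j * (B.submatrix (Fin.cons i I : Fin (k + 1) → Fin d) (Fin.cons j J)).det := by
  have h1 : ∀ j, (B.submatrix (Fin.cons i I : Fin (k + 1) → Fin d) (Fin.cons j J)).det =
      ∑ r : Fin (k + 1), (-1) ^ (r : ℕ) * B ((Fin.cons i I : Fin (k + 1) → Fin d) r) j *
        (B.submatrix ((Fin.cons i I : Fin (k + 1) → Fin d) ∘ r.succAbove) J).det := by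
    intro j
    rw [Matrix.det_succ_column_zero]
    refine Finset.sum_congr rfl fun r _ => ?_
    congr 1
  have h2 : ∑ j, e j * (B.submatrix (Fin.cons i I : Fin (k + 1) → Fin d) (Fin.cons j J)).det =
      ∑ r : Fin (k + 1), (-1) ^ (r : ℕ) * B.mulVec e ((Fin.cons i I : Fin (k + 1) → Fin d) r) *
        (B.submatrix ((Fin.cons i I : Fin (k + 1) → Fin d) ∘ r.succAbove) J).det := by
    simp only [h1, Finset.mul_sum]
    rw [Finset.sum_comm]
    refine Finset.sum_congr rfl fun r _ => ?_
    simp only [Matrix.mulVec, dotProduct, Finset.mul_sum, Finset.sum_mul]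
    refine Finset.sum_congr rfl fun j _ => ?_
    ring
  rw [h2, Fin.sum_univ_succ]
  simp [he]

/-- A quantitative splitting: there is a subspace `E` on which `B` is at most of size
`minorSum (k + 2) / minorSum (k + 1)`, and modulo which `B` is at least of size
`minorSum (k + 1) / minorSum k`. -/
theorem exists_slow_subspace (d k : ℕ) : ∃ C : ℝ, 1 ≤ C ∧ ∀ B : Matrix (Fin d) (Fin d) ℝ,
    0 < minorSum (k + 1) B → ∃ E : Submodule ℝ (Fin d → ℝ), (k + 1 < d → E ≠ ⊥) ∧
      (∀ e ∈ E, minorSum (k + 1) B * ‖B.mulVec e‖ ≤ C * minorSum (k + 2) B * ‖e‖) ∧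
      ∀ u, ∃ e ∈ E, minorSum (k + 1) B * ‖e - u‖ ≤ C * minorSum k B * ‖B.mulVec u‖ := by
  set D : ℝ := ((d ^ (k + 1) : ℕ) : ℝ) * ((d ^ (k + 1) : ℕ) : ℝ) with hD
  have hD0 : 0 ≤ D := by positivity
  refine ⟨max 1 (max (D * d) (D * ((k + 1) * (k + 1)))), le_max_left _ _, fun B hB => ?_⟩
  obtain ⟨I, J, hIJ⟩ := exists_minorSum_le_abs_minor hB
  set M := B.submatrix I J with hM
  have hdet : M.det ≠ 0 := fun h => by
    rw [h, abs_zero, mul_zero] at hIJ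
    linarith
  let L : (Fin d → ℝ) →ₗ[ℝ] (Fin (k + 1) → ℝ) := LinearMap.funLeft ℝ ℝ I ∘ₗ B.mulVecLin
  have hL : ∀ u a, L u a = B.mulVec u (I a) := fun u a => rfl
  refine ⟨LinearMap.ker L, fun hk => LinearMap.ker_ne_bot_of_finrank_lt (by simpa using hk),
    fun e he => ?_, fun u => ?_⟩
  · have he' : ∀ a, B.mulVec e (I a) = 0 := fun a => by
      rw [← hL, LinearMap.mem_ker.1 he]; rfl
    have h1 : ∀ i, |M.det| * ‖B.mulVec e i‖ ≤ d * minorSum (k + 2) B * ‖e‖ := by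
      intro i
      rw [Real.norm_eq_abs, mul_comm, ← abs_mul, hM, mulVec_mul_det_eq_sum B I J he' i]
      calc _ ≤ ∑ j : Fin d, ‖e‖ * minorSum (k + 2) B := by
            refine (Finset.abs_sum_le_sum_abs _ _).trans (Finset.sum_le_sum fun j _ => ?_)
            rw [abs_mul]
            gcongr
            · exact norm_le_pi_norm e j
            · exact abs_minor_le_minorSum B _ _
        _ = _ := by simp; ring
    have h2 : |M.det| * ‖B.mulVec e‖ ≤ d * minorSum (k + 2) B * ‖e‖ := by
      have hpos : 0 < |M.det| := abs_pos.2 hdet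
      have hn := minorSum_nonneg (k + 2) B
      rw [mul_comm, ← le_div_iff₀ hpos]
      refine (pi_norm_le_iff_of_nonneg (by positivity)).2 fun i => ?_
      rw [le_div_iff₀ hpos, mul_comm]
      exact h1 i
    calc minorSum (k + 1) B * ‖B.mulVec e‖ ≤ D * |M.det| * ‖B.mulVec e‖ := by gcongr
      _ ≤ D * (d * minorSum (k + 2) B * ‖e‖) := by
          rw [mul_assoc]; gcongr
      _ = D * d * (minorSum (k + 2) B * ‖e‖) := by ring
      _ ≤ _ := by
          rw [mul_assoc (max _ _)]
          have hn := minorSum_nonneg (k + 2) B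
          gcongr
          exact (le_max_left _ _).trans (le_max_right _ _)
  · let y : Fin (k + 1) → ℝ := fun a => B.mulVec u (I a)
    let c : Fin (k + 1) → ℝ := M.det⁻¹ • M.adjugate.mulVec y
    let w : Fin d → ℝ := ∑ a, c a • Pi.single (J a) (1 : ℝ)
    have hMc : M.mulVec c = y := by
      simp only [c, Matrix.mulVec_smul, Matrix.mulVec_mulVec, Matrix.mul_adjugate,
        Matrix.smul_mulVec, Matrix.one_mulVec, smul_smul, inv_mul_cancel₀ hdet, one_smul]
    have hBw : ∀ b, B.mulVec w (I b) = y b := by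
      intro b
      rw [← hMc]
      change B.mulVecLin w (I b) = ∑ a, M b a * c a
      simp only [w, map_sum, map_smul, Finset.sum_apply, Pi.smul_apply, smul_eq_mul,
        Matrix.mulVecLin_apply, Matrix.mulVec_single_one]
      refine Finset.sum_congr rfl fun a _ => ?_
      simp [hM, mul_comm]
    refine ⟨u - w, ?_, ?_⟩
    · rw [LinearMap.mem_ker]
      ext a
      rw [hL, Matrix.mulVec_sub, Pi.sub_apply, hBw]
      simp [y]
    · have hadj : ∀ a b, |M.adjugate a b| ≤ minorSum k B := by
        intro a b
        rw [Matrix.adjugate_fin_succ_eq_det_submatrix, abs_mul, abs_pow, abs_neg, abs_one, one_pow,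
          one_mul, hM, Matrix.submatrix_submatrix]
        exact abs_minor_le_minorSum B _ _
      have hc : ∀ a, |M.det| * |c a| ≤ (k + 1) * minorSum k B * ‖B.mulVec u‖ := by
        intro a
        have hca : M.det * c a = ∑ b, M.adjugate a b * y b := by
          simp only [c, Pi.smul_apply, smul_eq_mul, mul_inv_cancel_left₀ hdet, Matrix.mulVec,
            dotProduct]
        rw [← abs_mul, hca]
        calc _ ≤ ∑ b : Fin (k + 1), minorSum k B * ‖B.mulVec u‖ := by
              refine (Finset.abs_sum_le_sum_abs _ _).trans (Finset.sum_le_sum fun b _ => ?_)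
              rw [abs_mul]
              gcongr
              · exact minorSum_nonneg _ _
              · exact hadj a b
              · exact norm_le_pi_norm (B.mulVec u) (I b)
          _ = _ := by simp; ring
      have hw : |M.det| * ‖w‖ ≤ (k + 1) * ((k + 1) * minorSum k B * ‖B.mulVec u‖) := by
        calc |M.det| * ‖w‖ ≤ |M.det| * ∑ a, |c a| := by
              gcongr
              refine (norm_sum_le _ _).trans (Finset.sum_le_sum fun a _ => ?_)
              rw [norm_smul, Pi.norm_single, norm_one, mul_one, Real.norm_eq_abs]
          _ ≤ ∑ a : Fin (k + 1), (k + 1) * minorSum k B * ‖B.mulVec u‖ := by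
              rw [Finset.mul_sum]
              exact Finset.sum_le_sum fun a _ => hc a
          _ = _ := by simp
      have hsub : ‖u - w - u‖ = ‖w‖ := by simp
      rw [hsub]
      calc minorSum (k + 1) B * ‖w‖ ≤ D * |M.det| * ‖w‖ := by gcongr
        _ ≤ D * ((k + 1) * ((k + 1) * minorSum k B * ‖B.mulVec u‖)) := by
            rw [mul_assoc]; gcongr
        _ = D * ((k + 1) * (k + 1)) * (minorSum k B * ‖B.mulVec u‖) := by ring
        _ ≤ _ := by
            rw [mul_assoc (max _ _)]
            have hn := minorSum_nonneg k B
            gcongr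
            exact (le_max_right _ _).trans (le_max_right _ _)

end Minors

section Limits

theorem exists_ne_zero_limit_of_almost_invariant {V : Type*} [NormedAddCommGroup V]
    [CompleteSpace V] {E : ℕ → Set V} {C ρ : ℝ} {N : ℕ} (hρ : 0 < ρ) (hρ1 : ρ < 1) (hC : 0 ≤ C)
    (h : ∀ n, N ≤ n → ∀ u ∈ E n, ∃ w ∈ E (n + 1), ‖w - u‖ ≤ C * ρ ^ n * ‖u‖)
    (hne : ∀ n, ∃ u ∈ E n, u ≠ 0) :
    ∃ u : V, u ≠ 0 ∧ ∃ K : ℝ, 0 ≤ K ∧ ∀ᶠ n in atTop, ∃ w ∈ E n, ‖w‖ ≤ K ∧ ‖u - w‖ ≤ K * ρ ^ n := by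
  obtain ⟨M, hNM, hM⟩ : ∃ M, N ≤ M ∧ 4 * C * ρ ^ M ≤ 1 - ρ := by
    have ht : Tendsto (fun n => 4 * C * ρ ^ n) atTop (𝓝 (4 * C * 0)) :=
      (tendsto_pow_atTop_nhds_zero_of_lt_one hρ.le hρ1).const_mul _
    rw [mul_zero] at ht
    obtain ⟨M, h1, h2⟩ := ((eventually_ge_atTop N).and
      (ht.eventually (eventually_le_nhds (sub_pos.2 hρ1)))).exists
    exact ⟨M, h1, h2⟩
  have h' : ∀ n u, ∃ w, N ≤ n → u ∈ E n → w ∈ E (n + 1) ∧ ‖w - u‖ ≤ C * ρ ^ n * ‖u‖ := by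
    intro n u
    by_cases hn : N ≤ n ∧ u ∈ E n
    · obtain ⟨w, hw⟩ := h n hn.1 u hn.2
      exact ⟨w, fun _ _ => hw⟩
    · exact ⟨0, fun h1 h2 => absurd ⟨h1, h2⟩ hn⟩
  choose f hf using h'
  obtain ⟨u₀, hu₀, hu₀'⟩ := hne M
  set α := ‖u₀‖ with hα
  have hα0 : 0 < α := norm_pos_iff.2 hu₀'
  let w : ℕ → V := fun n => Nat.rec u₀ (fun n v => f (M + n) v) n
  have hw0 : w 0 = u₀ := rfl
  have hws : ∀ n, w (n + 1) = f (M + n) (w n) := fun _ => rfl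
  have hpow : ∀ n, 4 * C * ρ ^ (M + n) ≤ (1 - ρ) * ρ ^ n := fun n => by
    rw [pow_add, ← mul_assoc]
    exact mul_le_mul_of_nonneg_right hM (by positivity)
  have key : ∀ n, w n ∈ E (M + n) ∧ ‖w n‖ ≤ α * (2 - ρ ^ n) := by
    intro n
    induction n with
    | zero => exact ⟨hu₀, by rw [hw0, pow_zero]; linarith⟩
    | succ n ih =>
      obtain ⟨h1, h2⟩ := hf (M + n) (w n) (by omega) ih.1
      refine ⟨by rw [hws]; exact h1, ?_⟩
      have h3 : ‖w (n + 1)‖ ≤ ‖w (n + 1) - w n‖ + ‖w n‖ := by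
        simpa using norm_add_le (w (n + 1) - w n) (w n)
      have h4 : ‖w n‖ ≤ 2 * α := ih.2.trans (by nlinarith [pow_pos hρ n])
      have h5 : C * ρ ^ (M + n) * ‖w n‖ ≤ C * ρ ^ (M + n) * (2 * α) :=
        mul_le_mul_of_nonneg_left h4 (by positivity)
      rw [hws] at h3 ⊢
      have h6 := mul_le_mul_of_nonneg_right (hpow n) hα0.le
      have h7 := mul_nonneg (mul_nonneg (sub_nonneg.2 hρ1.le) (pow_nonneg hρ.le n)) hα0.le
      rw [pow_succ]
      nlinarith [ih.2]
  have hb : ∀ n, ‖w n‖ ≤ 2 * α := fun n => (key n).2.trans (by nlinarith [pow_pos hρ n])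
  have hdist : ∀ n, dist (w n) (w (n + 1)) ≤ α * (1 - ρ) / 2 * ρ ^ n := by
    intro n
    rw [dist_eq_norm, norm_sub_rev, hws]
    refine (hf (M + n) (w n) (by omega) (key n).1).2.trans ?_
    have h5 : C * ρ ^ (M + n) * ‖w n‖ ≤ C * ρ ^ (M + n) * (2 * α) :=
      mul_le_mul_of_nonneg_left (hb n) (by positivity)
    nlinarith [mul_le_mul_of_nonneg_right (hpow n) hα0.le]
  obtain ⟨a, ha⟩ := cauchySeq_tendsto_of_complete (cauchySeq_of_le_geometric ρ _ hρ1 hdist)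
  have hlim : ∀ n, ‖a - w n‖ ≤ α / 2 * ρ ^ n := by
    intro n
    rw [norm_sub_rev, ← dist_eq_norm]
    refine (dist_le_of_le_geometric_of_tendsto ρ _ hρ1 hdist ha n).trans (le_of_eq ?_)
    have : 1 - ρ ≠ 0 := (sub_pos.2 hρ1).ne'
    field_simp
  refine ⟨a, ?_, 2 * α + α / 2 / ρ ^ M, by positivity, ?_⟩
  · rintro rfl
    have := hlim 0
    rw [zero_sub, norm_neg, hw0, pow_zero, ← hα] at this
    linarith
  · filter_upwards [eventually_ge_atTop M] with n hn
    obtain ⟨m, rfl⟩ := Nat.exists_eq_add_of_le hn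
    refine ⟨w m, (key m).1, (hb m).trans (by simpa using by positivity), (hlim m).trans ?_⟩
    have hpos := pow_pos hρ M
    calc α / 2 * ρ ^ m = α / 2 / ρ ^ M * ρ ^ (M + m) := by rw [pow_add]; field_simp
      _ ≤ _ := by
        refine mul_le_mul_of_nonneg_right ?_ (by positivity)
        linarith

theorem eventually_le_exp_of_tendsto_log {x : ℕ → ℝ} {l : EReal} {q : ℝ} (hx : ∀ n, 0 < x n)
    (h : Tendsto (fun n : ℕ => ((Real.log (x n) / n : ℝ) : EReal)) atTop (𝓝 l)) (hq : l < q) :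
    ∀ᶠ n : ℕ in atTop, x n ≤ Real.exp (q * n) := by
  filter_upwards [h.eventually_lt_const hq, eventually_gt_atTop 0] with n hn h0
  rw [EReal.coe_lt_coe_iff, div_lt_iff₀ (by exact_mod_cast h0)] at hn
  rw [← Real.log_le_iff_le_exp (hx n)]
  exact hn.le

theorem eventually_exp_le_of_tendsto_log {x : ℕ → ℝ} {l : EReal} {q : ℝ} (hx : ∀ n, 0 < x n)
    (h : Tendsto (fun n : ℕ => ((Real.log (x n) / n : ℝ) : EReal)) atTop (𝓝 l)) (hq : q < l) :
    ∀ᶠ n : ℕ in atTop, Real.exp (q * n) ≤ x n := by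
  filter_upwards [h.eventually_const_lt hq, eventually_gt_atTop 0] with n hn h0
  rw [EReal.coe_lt_coe_iff, lt_div_iff₀ (by exact_mod_cast h0)] at hn
  rw [← Real.le_log_iff_exp_le (hx n)]
  exact hn.le

theorem exists_ne_zero_isBigO_mulVec {d k : ℕ} {B D : ℕ → Matrix (Fin d) (Fin d) ℝ} {l ε : ℝ}
    (hε : 0 < ε) (hk : k + 1 < d) (hpos : ∀ n, 0 < minorSum (k + 1) (B n))
    (hBD : ∀ n, B (n + 1) = D n * B n)
    (hupper : ∀ᶠ n : ℕ in atTop,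
      minorSum (k + 2) (B n) ≤ Real.exp ((l - 4 * ε) * n) * minorSum (k + 1) (B n))
    (hlower : ∀ᶠ n : ℕ in atTop,
      minorSum k (B n) ≤ Real.exp ((-l + ε) * n) * minorSum (k + 1) (B n))
    (hD : ∀ᶠ n : ℕ in atTop, minorSum 1 (D n) ≤ Real.exp (ε * n))
    (hB : ∀ᶠ n : ℕ in atTop, minorSum 1 (B n) ≤ Real.exp ((l + ε) * n)) :
    ∃ u : Fin d → ℝ, u ≠ 0 ∧
      (fun n => (B n).mulVec u) =O[atTop] fun n : ℕ => Real.exp ((l - ε) * n) := by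
  obtain ⟨C, hC1, hC⟩ := exists_slow_subspace d k
  have hC0 : 0 ≤ C := zero_le_one.trans hC1
  choose E hEne hEslow hEnear using fun n => hC (B n) (hpos n)
  have hslow : ∀ᶠ n : ℕ in atTop, ∀ e ∈ E n,
      ‖(B n).mulVec e‖ ≤ C * Real.exp ((l - 4 * ε) * n) * ‖e‖ := by
    filter_upwards [hupper] with n hn e he
    refine le_of_mul_le_mul_left ((hEslow n e he).trans ?_) (hpos n)
    calc C * minorSum (k + 2) (B n) * ‖e‖
        ≤ C * (Real.exp ((l - 4 * ε) * n) * minorSum (k + 1) (B n)) * ‖e‖ := by gcongr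
      _ = _ := by ring
  obtain ⟨N, hN⟩ := eventually_atTop.1
    ((hslow.and hD).and ((tendsto_add_atTop_nat 1).eventually hlower))
  obtain ⟨u, hu, K, hK, hlim⟩ := exists_ne_zero_limit_of_almost_invariant
    (E := fun n => (E n : Set (Fin d → ℝ))) (C := C ^ 2 * Real.exp (-l + ε))
    (ρ := Real.exp (-(2 * ε))) (N := N) (Real.exp_pos _)
    (Real.exp_lt_one_iff.2 (by linarith)) (by positivity)
    (by
      intro n hn u hu
      obtain ⟨⟨h1, h2⟩, h3⟩ := hN n hn
      obtain ⟨w, hw, hwu⟩ := hEnear (n + 1) u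
      refine ⟨w, hw, le_of_mul_le_mul_left (hwu.trans ?_) (hpos (n + 1))⟩
      have h4 : ‖(B (n + 1)).mulVec u‖ ≤
          Real.exp (ε * n) * (C * Real.exp ((l - 4 * ε) * n) * ‖u‖) := by
        rw [hBD, ← Matrix.mulVec_mulVec]
        refine (norm_mulVec_le_minorSum_one _ _).trans ?_
        exact mul_le_mul h2 (h1 u hu) (norm_nonneg _) (Real.exp_pos _).le
      have h5 : Real.exp ((-l + ε) * ((n + 1 : ℕ) : ℝ)) *
          (Real.exp (ε * n) * Real.exp ((l - 4 * ε) * n)) =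
          Real.exp (-l + ε) * Real.exp (-(2 * ε)) ^ n := by
        rw [← Real.exp_nat_mul, ← Real.exp_add, ← Real.exp_add, ← Real.exp_add]
        push_cast
        ring_nf
      calc C * minorSum k (B (n + 1)) * ‖(B (n + 1)).mulVec u‖
          ≤ C * (Real.exp ((-l + ε) * ((n + 1 : ℕ) : ℝ)) * minorSum (k + 1) (B (n + 1))) *
            (Real.exp (ε * n) * (C * Real.exp ((l - 4 * ε) * n) * ‖u‖)) := by
              have := (hpos (n + 1)).le
              gcongr
        _ = minorSum (k + 1) (B (n + 1)) * (C ^ 2 * (Real.exp ((-l + ε) * ((n + 1 : ℕ) : ℝ)) *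
          (Real.exp (ε * n) * Real.exp ((l - 4 * ε) * n))) * ‖u‖) := by ring
        _ = _ := by rw [h5]; ring)
    (fun n => by
      obtain ⟨u, h1, h2⟩ := (Submodule.ne_bot_iff _).1 (hEne n hk)
      exact ⟨u, h1, h2⟩)
  refine ⟨u, hu, Asymptotics.IsBigO.of_bound (C * K + K) ?_⟩
  filter_upwards [hlim, hslow, hB] with n ⟨w, hw, hwK, huw⟩ hs hb
  rw [Real.norm_of_nonneg (Real.exp_pos _).le]
  have h1 : (B n).mulVec u = (B n).mulVec w + (B n).mulVec (u - w) := by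
    rw [← Matrix.mulVec_add, add_sub_cancel]
  have h2 : ‖(B n).mulVec w‖ ≤ C * K * Real.exp ((l - ε) * n) := by
    calc _ ≤ C * Real.exp ((l - 4 * ε) * n) * ‖w‖ := hs w hw
      _ ≤ C * Real.exp ((l - ε) * n) * K := by
        gcongr
        linarith
      _ = _ := by ring
  have h3 : ‖(B n).mulVec (u - w)‖ ≤ K * Real.exp ((l - ε) * n) := by
    calc _ ≤ minorSum 1 (B n) * ‖u - w‖ := norm_mulVec_le_minorSum_one _ _
      _ ≤ Real.exp ((l + ε) * n) * (K * Real.exp (-(2 * ε)) ^ n) := by gcongr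
      _ = K * (Real.exp ((l + ε) * n) * Real.exp (-(2 * ε)) ^ n) := by ring
      _ = _ := by
        rw [← Real.exp_nat_mul, ← Real.exp_add]
        ring_nf
  rw [h1, add_mul]
  exact (norm_add_le _ _).trans (add_le_add h2 h3)

end Limits

section Growth

variable {d : ℕ}

theorem eventually_mul_exp_le_exp {q r : ℝ} (hqr : q < r) (K : ℝ) :
    ∀ᶠ n : ℕ in atTop, K * Real.exp (q * n) ≤ Real.exp (r * n) := by
  have h : Tendsto (fun n : ℕ => Real.exp ((r - q) * n)) atTop atTop :=
    Real.tendsto_exp_atTop.comp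
      (tendsto_natCast_atTop_atTop.const_mul_atTop (sub_pos.2 hqr))
  filter_upwards [h.eventually_ge_atTop K] with n hn
  calc K * Real.exp (q * n) ≤ Real.exp ((r - q) * n) * Real.exp (q * n) := by gcongr
    _ = Real.exp (r * n) := by rw [← Real.exp_add]; ring_nf

theorem exists_norm_le_mul_norm_ofLp (d : ℕ) :
    ∃ K : ℝ, 0 < K ∧ ∀ v : EuclideanSpace ℝ (Fin d), ‖v.ofLp‖ ≤ K * ‖v‖ ∧ ‖v‖ ≤ K * ‖v.ofLp‖ := by
  let e := EuclideanSpace.equiv (Fin d) ℝ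
  refine ⟨‖(e : EuclideanSpace ℝ (Fin d) →L[ℝ] (Fin d → ℝ))‖ +
    ‖(e.symm : (Fin d → ℝ) →L[ℝ] EuclideanSpace ℝ (Fin d))‖ + 1, by positivity, fun v => ⟨?_, ?_⟩⟩
  · refine ((e : EuclideanSpace ℝ (Fin d) →L[ℝ] (Fin d → ℝ)).le_opNorm v).trans ?_
    gcongr
    linarith [norm_nonneg (e.symm : (Fin d → ℝ) →L[ℝ] EuclideanSpace ℝ (Fin d))]
  · refine ((e.symm : (Fin d → ℝ) →L[ℝ] EuclideanSpace ℝ (Fin d)).le_opNorm v.ofLp).trans ?_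
    gcongr
    linarith [norm_nonneg (e : EuclideanSpace ℝ (Fin d) →L[ℝ] (Fin d → ℝ))]

theorem uniform_growth_of_minorSum {B : ℕ → Matrix (Fin d) (Fin d) ℝ} {l : EReal}
    (hB : ∀ n, IsUnit (B n))
    (hup : ∀ q : ℝ, l < q → ∀ᶠ n : ℕ in atTop, minorSum 1 (B n) ≤ Real.exp (q * n))
    (hlow : ∀ q : ℝ, q < l → ∀ᶠ n : ℕ in atTop, ∀ u : Fin d → ℝ,
      Real.exp (q * n) * ‖u‖ ≤ ‖(B n).mulVec u‖) :
    (∀ v : EuclideanSpace ℝ (Fin d), v ≠ 0 →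
      Tendsto (fun n : ℕ => ((Real.log ‖Matrix.toEuclideanLin (B n) v‖ / (n : ℝ) : ℝ) : EReal))
        atTop (𝓝 l)) ∧
    ∀ U : Set EReal, U ∈ 𝓝 l → ∀ᶠ n : ℕ in atTop, ∀ v : EuclideanSpace ℝ (Fin d), ‖v‖ = 1 →
      ((Real.log ‖Matrix.toEuclideanLin (B n) v‖ / (n : ℝ) : ℝ) : EReal) ∈ U := by
  obtain ⟨K, hK, hnorm⟩ := exists_norm_le_mul_norm_ofLp d
  have hpos : ∀ n (v : EuclideanSpace ℝ (Fin d)), v ≠ 0 →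
      0 < ‖Matrix.toEuclideanLin (B n) v‖ := by
    intro n v hv
    rw [norm_pos_iff]
    intro h0
    apply hv
    have h1 : (B n).mulVec v.ofLp = 0 := congrArg WithLp.ofLp h0
    have h2 := Matrix.mulVec_injective_of_isUnit (hB n) (h1.trans (Matrix.mulVec_zero _).symm)
    ext i
    exact congrFun h2 i
  have hup2 : ∀ q : ℝ, l < q → ∀ c : ℝ, 0 < c → ∀ᶠ n : ℕ in atTop,
      ∀ v : EuclideanSpace ℝ (Fin d), v ≠ 0 → ‖v‖ ≤ c →
      ((Real.log ‖Matrix.toEuclideanLin (B n) v‖ / (n : ℝ) : ℝ) : EReal) ≤ q := by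
    intro q hq c hc
    obtain ⟨r, hlr, hrq⟩ := EReal.lt_iff_exists_real_btwn.1 hq
    filter_upwards [hup r hlr, eventually_mul_exp_le_exp (EReal.coe_lt_coe_iff.1 hrq) (K * K * c),
      eventually_gt_atTop 0] with n h1 h2 h3 v hv hvc
    rw [EReal.coe_le_coe_iff, div_le_iff₀ (by exact_mod_cast h3),
      Real.log_le_iff_le_exp (hpos n v hv)]
    calc ‖Matrix.toEuclideanLin (B n) v‖ ≤ K * ‖(B n).mulVec v.ofLp‖ := (hnorm _).2
      _ ≤ K * (minorSum 1 (B n) * ‖v.ofLp‖) := by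
        gcongr; exact norm_mulVec_le_minorSum_one _ _
      _ ≤ K * (Real.exp (r * n) * (K * c)) := by
        gcongr; exact (hnorm v).1.trans (by gcongr)
      _ = K * K * c * Real.exp (r * n) := by ring
      _ ≤ _ := h2
  have hlow2 : ∀ q : ℝ, q < l → ∀ c : ℝ, 0 < c → ∀ᶠ n : ℕ in atTop,
      ∀ v : EuclideanSpace ℝ (Fin d), v ≠ 0 → c ≤ ‖v‖ →
      (q : EReal) ≤ ((Real.log ‖Matrix.toEuclideanLin (B n) v‖ / (n : ℝ) : ℝ) : EReal) := by
    intro q hq c hc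
    obtain ⟨r, hqr, hrl⟩ := EReal.lt_iff_exists_real_btwn.1 hq
    filter_upwards [hlow r hrl, eventually_mul_exp_le_exp (EReal.coe_lt_coe_iff.1 hqr) (K * K / c),
      eventually_gt_atTop 0] with n h1 h2 h3 v hv hvc
    rw [EReal.coe_le_coe_iff, le_div_iff₀ (by exact_mod_cast h3),
      Real.le_log_iff_exp_le (hpos n v hv)]
    have h4 := h1 v.ofLp
    have h5 : ‖(B n).mulVec v.ofLp‖ ≤ K * ‖Matrix.toEuclideanLin (B n) v‖ :=
      (hnorm (Matrix.toEuclideanLin (B n) v)).1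
    have h6 : K * K * Real.exp (q * n) ≤ K * K * ‖Matrix.toEuclideanLin (B n) v‖ :=
      calc K * K * Real.exp (q * n) = c * (K * K / c * Real.exp (q * n)) := by field_simp
        _ ≤ ‖v‖ * Real.exp (r * n) := by gcongr
        _ ≤ K * ‖v.ofLp‖ * Real.exp (r * n) := by gcongr; exact (hnorm v).2
        _ = K * (Real.exp (r * n) * ‖v.ofLp‖) := by ring
        _ ≤ K * (K * ‖Matrix.toEuclideanLin (B n) v‖) := mul_le_mul_of_nonneg_left (h4.trans h5) hK.le
        _ = _ := by ring
    exact le_of_mul_le_mul_left h6 (by positivity)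
  constructor
  · intro v hv
    rw [tendsto_order]
    have hv0 := norm_pos_iff.2 hv
    refine ⟨fun a ha => ?_, fun a ha => ?_⟩
    · obtain ⟨q, haq, hql⟩ := EReal.lt_iff_exists_real_btwn.1 ha
      filter_upwards [hlow2 q hql _ hv0] with n hn
      exact haq.trans_le (hn v hv le_rfl)
    · obtain ⟨q, hlq, hqa⟩ := EReal.lt_iff_exists_real_btwn.1 ha
      filter_upwards [hup2 q hlq _ hv0] with n hn
      exact (hn v hv le_rfl).trans_lt hqa
  · intro U hU
    have ht : Tendsto (fun p : ℕ × EuclideanSpace ℝ (Fin d) =>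
        ((Real.log ‖Matrix.toEuclideanLin (B p.1) p.2‖ / (p.1 : ℝ) : ℝ) : EReal))
        (atTop ×ˢ 𝓟 {v | ‖v‖ = 1}) (𝓝 l) := by
      have hne : ∀ v : EuclideanSpace ℝ (Fin d), ‖v‖ = 1 → v ≠ 0 := fun v hv =>
        norm_pos_iff.1 (by rw [hv]; exact one_pos)
      rw [tendsto_order]
      refine ⟨fun a ha => ?_, fun a ha => ?_⟩
      · obtain ⟨q, haq, hql⟩ := EReal.lt_iff_exists_real_btwn.1 ha
        rw [eventually_prod_principal_iff]
        filter_upwards [hlow2 q hql 1 one_pos] with n hn v hv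
        exact haq.trans_le (hn v (hne v hv) (le_of_eq hv.symm))
      · obtain ⟨q, hlq, hqa⟩ := EReal.lt_iff_exists_real_btwn.1 ha
        rw [eventually_prod_principal_iff]
        filter_upwards [hup2 q hlq 1 one_pos] with n hn v hv
        exact (hn v (hne v hv) (le_of_eq hv)).trans_lt hqa
    exact eventually_prod_principal_iff.1 (ht hU)

end Growth

section SlowSubspace

variable {d : ℕ}

/-- The vectors whose images under the matrices `B n` grow at most like `exp (c * n)`. -/
noncomputable def slowSubspace (B : ℕ → Matrix (Fin d) (Fin d) ℝ) (c : ℝ) :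
    Submodule ℝ (EuclideanSpace ℝ (Fin d)) where
  carrier := {v | (fun n => (B n).mulVec v.ofLp) =O[atTop] fun n : ℕ => Real.exp (c * n)}
  add_mem' {v w} hv hw := by
    have h : (fun n => (B n).mulVec (v + w).ofLp) =
        fun n => (B n).mulVec v.ofLp + (B n).mulVec w.ofLp :=
      funext fun n => Matrix.mulVec_add _ _ _
    change (fun n => (B n).mulVec (v + w).ofLp) =O[atTop] _
    rw [h]
    exact Asymptotics.IsBigO.add hv hw
  zero_mem' := by
    have h : (fun n => (B n).mulVec (0 : EuclideanSpace ℝ (Fin d)).ofLp) = fun _ => 0 :=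
      funext fun n => Matrix.mulVec_zero _
    change (fun n => (B n).mulVec (0 : EuclideanSpace ℝ (Fin d)).ofLp) =O[atTop] _
    rw [h]
    exact Asymptotics.isBigO_zero _ _
  smul_mem' a v hv := by
    have h : (fun n => (B n).mulVec (a • v).ofLp) = fun n => a • (B n).mulVec v.ofLp :=
      funext fun n => Matrix.mulVec_smul _ _ _
    change (fun n => (B n).mulVec (a • v).ofLp) =O[atTop] _
    rw [h]
    exact Asymptotics.IsBigO.const_smul_left hv a

theorem mem_slowSubspace {B : ℕ → Matrix (Fin d) (Fin d) ℝ} {c : ℝ}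
    {v : EuclideanSpace ℝ (Fin d)} :
    v ∈ slowSubspace B c ↔
      (fun n => (B n).mulVec v.ofLp) =O[atTop] fun n : ℕ => Real.exp (c * n) :=
  Iff.rfl

theorem mem_slowSubspace_iff_exists_nat {B : ℕ → Matrix (Fin d) (Fin d) ℝ} {c : ℝ}
    {v : EuclideanSpace ℝ (Fin d)} :
    v ∈ slowSubspace B c ↔ ∃ K N : ℕ, ∀ n ≥ N, ∀ i,
      |∑ j, B n i j * v j| ≤ K * Real.exp (c * n) := by
  have key : ∀ (K : ℝ) (n : ℕ), 0 ≤ K → (‖(B n).mulVec v.ofLp‖ ≤ K * ‖Real.exp (c * n)‖ ↔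
      ∀ i, |∑ j, B n i j * v j| ≤ K * Real.exp (c * n)) := by
    intro K n hK
    rw [Real.norm_of_nonneg (Real.exp_pos _).le, pi_norm_le_iff_of_nonneg (by positivity)]
    rfl
  rw [mem_slowSubspace, Asymptotics.isBigO_iff]
  constructor
  · rintro ⟨K, hK⟩
    obtain ⟨m, hm⟩ := exists_nat_ge K
    obtain ⟨N, hN⟩ := eventually_atTop.1 hK
    refine ⟨m, N, fun n hn => (key m n m.cast_nonneg).1 ((hN n hn).trans ?_)⟩
    gcongr
  · rintro ⟨K, N, h⟩
    exact ⟨K, eventually_atTop.2 ⟨N, fun n hn => (key K n K.cast_nonneg).2 (h n hn)⟩⟩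

theorem measurableSet_slowSubspace {Ω : Type*} [MeasurableSpace Ω]
    {B : Ω → ℕ → Matrix (Fin d) (Fin d) ℝ} (hB : ∀ n i j, Measurable fun ω => B ω n i j) (c : ℝ) :
    MeasurableSet {p : Ω × EuclideanSpace ℝ (Fin d) | p.2 ∈ slowSubspace (B p.1) c} := by
  have h : ∀ n i, Measurable fun p : Ω × EuclideanSpace ℝ (Fin d) =>
      |∑ j, B p.1 n i j * p.2 j| := by
    intro n i
    refine (Finset.measurable_sum _ fun j _ => ?_).abs
    refine ((hB n i j).comp measurable_fst).mul ?_
    exact (by fun_prop : Continuous fun v : EuclideanSpace ℝ (Fin d) => v j).measurable.comp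
      measurable_snd
  simp only [mem_slowSubspace_iff_exists_nat, ge_iff_le, Set.ofPred_exists, Set.ofPred_forall]
  exact .iUnion fun K => .iUnion fun N => .iInter fun n => .iInter fun _ => .iInter fun i =>
    measurableSet_le (h n i) measurable_const

theorem slowSubspace_ne_top {B : ℕ → Matrix (Fin d) (Fin d) ℝ} {c q : ℝ} (hcq : c < q)
    (h : ∀ᶠ n : ℕ in atTop, Real.exp (q * n) ≤ minorSum 1 (B n)) : slowSubspace B c ≠ ⊤ := by
  intro htop
  have h1 : ∀ i j, (fun n => |B n i j|) =O[atTop] fun n : ℕ => Real.exp (c * n) := by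
    intro i j
    have h2 : WithLp.toLp 2 (Pi.single j 1) ∈ slowSubspace B c := htop ▸ Submodule.mem_top
    rw [mem_slowSubspace] at h2
    refine (Asymptotics.IsBigO.of_bound 1 (Eventually.of_forall fun n => ?_)).trans h2
    have h3 := norm_le_pi_norm ((B n).mulVec (Pi.single j 1)) i
    simpa using h3
  have h2 : (fun n => minorSum 1 (B n)) =O[atTop] fun n : ℕ => Real.exp (c * n) := by
    simp only [minorSum_one]
    exact Asymptotics.IsBigO.fun_sum fun i _ => Asymptotics.IsBigO.fun_sum fun j _ => h1 i j
  obtain ⟨K, hK⟩ := h2.bound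
  obtain ⟨n, h3, h4, h5⟩ := (hK.and (h.and (eventually_mul_exp_le_exp hcq (K + 1)))).exists
  rw [Real.norm_of_nonneg (minorSum_nonneg _ _), Real.norm_of_nonneg (Real.exp_pos _).le] at h3
  linarith [Real.exp_pos (c * n)]

theorem slowSubspace_ne_bot {B : ℕ → Matrix (Fin d) (Fin d) ℝ} {c : ℝ} {u : Fin d → ℝ}
    (hu : u ≠ 0) (h : (fun n => (B n).mulVec u) =O[atTop] fun n : ℕ => Real.exp (c * n)) :
    slowSubspace B c ≠ ⊥ :=
  (Submodule.ne_bot_iff _).2 ⟨WithLp.toLp 2 u, h, by simpa using hu⟩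

end SlowSubspace

section Rates

variable {d k : ℕ} {B : ℕ → Matrix (Fin d) (Fin d) ℝ} {l : ℝ}

theorem eventually_minorSum_le_exp_mul_minorSum_succ
    (hB : ∀ q, l < q → ∀ᶠ n : ℕ in atTop, minorSum 1 (B n) ≤ Real.exp (q * n))
    (hk : ∀ q, q < (k + 1) * l → ∀ᶠ n : ℕ in atTop, Real.exp (q * n) ≤ minorSum (k + 1) (B n))
    {ε : ℝ} (hε : 0 < ε) :
    ∀ᶠ n : ℕ in atTop, minorSum k (B n) ≤ Real.exp ((-l + ε) * n) * minorSum (k + 1) (B n) := by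
  obtain ⟨C, hC1, hC⟩ := minorSum_le_pow d k
  obtain ⟨δ, hδ, hδε⟩ : ∃ δ > 0, (k + 1) * δ < ε :=
    ⟨ε / (k + 2), by positivity, by
      rw [mul_div_assoc', div_lt_iff₀ (by positivity)]; nlinarith⟩
  filter_upwards [hB (l + δ) (by linarith), hk ((k + 1) * l - δ) (by linarith),
    eventually_mul_exp_le_exp (q := k * (l + δ)) (r := (-l + ε) + ((k + 1) * l - δ))
      (by nlinarith) C] with n h1 h2 h3
  calc minorSum k (B n) ≤ C * minorSum 1 (B n) ^ k := hC _
    _ ≤ C * Real.exp ((l + δ) * n) ^ k := by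
      have := minorSum_nonneg 1 (B n)
      gcongr
    _ = C * Real.exp (k * (l + δ) * n) := by rw [← Real.exp_nat_mul, mul_assoc]
    _ ≤ Real.exp ((-l + ε + ((k + 1) * l - δ)) * n) := h3
    _ = Real.exp ((-l + ε) * n) * Real.exp (((k + 1) * l - δ) * n) := by
      rw [← Real.exp_add, ← add_mul]
    _ ≤ _ := by gcongr

theorem eventually_exp_mul_norm_le_norm_mulVec (hd : d = k + 1) (hunit : ∀ n, IsUnit (B n))
    (hB : ∀ q, l < q → ∀ᶠ n : ℕ in atTop, minorSum 1 (B n) ≤ Real.exp (q * n))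
    (hk : ∀ q, q < (k + 1) * l → ∀ᶠ n : ℕ in atTop, Real.exp (q * n) ≤ minorSum (k + 1) (B n))
    {q : ℝ} (hq : q < l) :
    ∀ᶠ n : ℕ in atTop, ∀ u : Fin d → ℝ, Real.exp (q * n) * ‖u‖ ≤ ‖(B n).mulVec u‖ := by
  obtain ⟨C, hC1, hC⟩ := exists_slow_subspace d k
  have hC0 : 0 ≤ C := zero_le_one.trans hC1
  filter_upwards [eventually_minorSum_le_exp_mul_minorSum_succ hB hk
    (half_pos (sub_pos.2 hq)),
    eventually_mul_exp_le_exp (q := q + (-l + (l - q) / 2)) (r := 0) (by linarith) C]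
    with n h1 h2 u
  have hpos : 0 < minorSum (k + 1) (B n) := minorSum_pos hd.ge (hunit n)
  obtain ⟨E, -, hE, hnear⟩ := hC (B n) hpos
  obtain ⟨e, he, heu⟩ := hnear u
  have hBe : (B n).mulVec e = 0 := by
    have h3 := hE e he
    rw [minorSum_eq_zero_of_lt (k := k + 2) (by omega), mul_zero, zero_mul] at h3
    exact norm_le_zero_iff.1 (le_of_mul_le_mul_left (h3.trans_eq (mul_zero _).symm) hpos)
  have he0 : e = 0 :=
    Matrix.mulVec_injective_of_isUnit (hunit n) (hBe.trans (Matrix.mulVec_zero _).symm)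
  rw [he0, zero_sub, norm_neg] at heu
  have h4 : ‖u‖ ≤ C * Real.exp ((-l + (l - q) / 2) * n) * ‖(B n).mulVec u‖ := by
    refine le_of_mul_le_mul_left (heu.trans ?_) hpos
    calc C * minorSum k (B n) * ‖(B n).mulVec u‖
        ≤ C * (Real.exp ((-l + (l - q) / 2) * n) * minorSum (k + 1) (B n)) *
          ‖(B n).mulVec u‖ := by gcongr
      _ = _ := by ring
  rw [zero_mul, Real.exp_zero, add_mul, Real.exp_add] at h2
  calc Real.exp (q * n) * ‖u‖
      ≤ Real.exp (q * n) * (C * Real.exp ((-l + (l - q) / 2) * n) * ‖(B n).mulVec u‖) := by gcongr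
    _ = C * (Real.exp (q * n) * Real.exp ((-l + (l - q) / 2) * n)) * ‖(B n).mulVec u‖ := by ring
    _ ≤ 1 * ‖(B n).mulVec u‖ := by gcongr
    _ = _ := one_mul _

end Rates

section Cocycle

variable {Ω : Type*} {d : ℕ} {T : Ω → Ω} {A : Ω → Matrix (Fin d) (Fin d) ℝ}

theorem cocycIter_add (m n : ℕ) (ω : Ω) :
    cocycIter T A (m + n) ω = cocycIter T A n (T^[m] ω) * cocycIter T A m ω := by
  induction m generalizing ω with
  | zero => simp [cocycIter]
  | succ m ih =>
    rw [Nat.add_right_comm, cocycIter, ih, cocycIter, Function.iterate_succ_apply, Matrix.mul_assoc]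

theorem cocycIter_one (ω : Ω) : cocycIter T A 1 ω = A ω := by simp [cocycIter]

theorem cocycIter_succ_eq (n : ℕ) (ω : Ω) :
    cocycIter T A (n + 1) ω = A (T^[n] ω) * cocycIter T A n ω := by
  rw [cocycIter_add, cocycIter_one]

theorem isUnit_cocycIter (hA : ∀ ω, IsUnit (A ω)) (n : ℕ) (ω : Ω) :
    IsUnit (cocycIter T A n ω) := by
  induction n generalizing ω with
  | zero => exact isUnit_one
  | succ n ih => exact (ih (T ω)).mul (hA ω)

theorem map_slowSubspace_cocycIter {ω : Ω} (hA : IsUnit (A ω)) (c : ℝ) :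
    (slowSubspace (fun n => cocycIter T A n ω) c).map (Matrix.toEuclideanLin (A ω)) =
      slowSubspace (fun n => cocycIter T A n (T ω)) c := by
  have key : ∀ v : EuclideanSpace ℝ (Fin d), v ∈ slowSubspace (fun n => cocycIter T A n ω) c ↔
      Matrix.toEuclideanLin (A ω) v ∈ slowSubspace (fun n => cocycIter T A n (T ω)) c := by
    intro v
    have h1 : (fun n => (cocycIter T A n (T ω)).mulVec (Matrix.toEuclideanLin (A ω) v).ofLp) =
        (fun n => (cocycIter T A n ω).mulVec v.ofLp) ∘ (· + 1) :=
      funext fun n =>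
        Matrix.mulVec_mulVec v.ofLp (cocycIter T A n (T ω)) (A ω)
    have h2 : (fun n : ℕ => Real.exp (c * n)) ∘ (· + 1) =
        fun n : ℕ => Real.exp c * Real.exp (c * n) := by
      funext n
      simp only [Function.comp_apply, Nat.cast_add, Nat.cast_one, ← Real.exp_add]
      ring_nf
    rw [mem_slowSubspace, mem_slowSubspace, h1,
      ← Asymptotics.isBigO_const_mul_right_iff (f := _ ∘ _) (Real.exp_pos c).ne', ← h2,
      ← Asymptotics.isBigO_map, map_add_atTop_eq_nat]
  ext w
  constructor
  · rintro ⟨v, hv, rfl⟩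
    exact (key v).1 hv
  · intro hw
    obtain ⟨u, hu⟩ := Matrix.mulVec_surjective_iff_isUnit.2 hA w.ofLp
    have hw' : Matrix.toEuclideanLin (A ω) (WithLp.toLp 2 u) = w := congrArg (WithLp.toLp 2) hu
    exact ⟨WithLp.toLp 2 u, (key _).2 (hw' ▸ hw), hw'⟩

variable [MeasurableSpace Ω]

theorem measurable_cocycIter_apply (hT : Measurable T) (hA : ∀ i j, Measurable fun ω => A ω i j)
    (n : ℕ) (i j : Fin d) : Measurable fun ω => cocycIter T A n ω i j := by
  induction n generalizing i j with
  | zero => exact measurable_const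
  | succ n ih =>
    simp only [cocycIter, Matrix.mul_apply]
    exact Finset.measurable_sum _ fun m _ => ((ih i m).comp hT).mul (hA m j)

theorem measurable_minorSum {B : Ω → Matrix (Fin d) (Fin d) ℝ}
    (hB : ∀ i j, Measurable fun ω => B ω i j) (k : ℕ) : Measurable fun ω => minorSum k (B ω) := by
  simp only [minorSum, Matrix.det_apply, Matrix.submatrix_apply]
  refine Finset.measurable_sum _ fun I _ => Finset.measurable_sum _ fun J _ => Measurable.abs ?_
  refine Finset.measurable_sum _ fun σ _ => Measurable.const_smul ?_ _
  exact Finset.measurable_prod _ fun i _ => hB _ _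

theorem integrable_posPart_log_minorSum_one {μ : Measure Ω} [IsFiniteMeasure μ] (hd : 0 < d)
    (hu : ∀ ω, IsUnit (A ω)) (hA : ∀ i j, Measurable fun ω => A ω i j)
    (hint : Integrable (fun ω => max (Real.log (matOpNorm (A ω))) 0) μ) :
    Integrable (fun ω => max (Real.log (minorSum 1 (A ω))) 0) μ := by
  have hd1 : (1 : ℝ) ≤ d := by exact_mod_cast hd
  have hle : ∀ B : Matrix (Fin d) (Fin d) ℝ, minorSum 1 B ≤ d * d * matOpNorm B := by
    intro B
    have hij : ∀ i j, |B i j| ≤ matOpNorm B := by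
      intro i j
      have h1 := PiLp.norm_apply_le
        (Matrix.toEuclideanCLM (𝕜 := ℝ) B (EuclideanSpace.single j 1)) i
      have h2 := (Matrix.toEuclideanCLM (𝕜 := ℝ) B).le_opNorm (EuclideanSpace.single j 1)
      rw [PiLp.norm_single, norm_one, mul_one] at h2
      refine le_trans (le_of_eq ?_) (h1.trans h2)
      change |B i j| = |B.mulVec (Pi.single j 1) i|
      simp
    rw [minorSum_one]
    calc ∑ i, ∑ j, |B i j| ≤ ∑ _i : Fin d, ∑ _j : Fin d, matOpNorm B :=
          Finset.sum_le_sum fun i _ => Finset.sum_le_sum fun j _ => hij i j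
      _ = _ := by simp [mul_assoc]
  refine ((integrable_const (Real.log (d * d))).add hint).mono'
    ((Real.measurable_log.comp (measurable_minorSum hA 1)).max measurable_const).aestronglyMeasurable
    (Eventually.of_forall fun ω => ?_)
  have hpos : 0 < minorSum 1 (A ω) := minorSum_pos hd (hu ω)
  have hop : 0 < matOpNorm (A ω) :=
    pos_of_mul_pos_right (hpos.trans_le (hle (A ω))) (by positivity)
  have hlog : 0 ≤ Real.log (d * d) := Real.log_nonneg (by nlinarith)
  rw [Real.norm_of_nonneg (le_max_right _ _)]
  refine max_le ?_ (add_nonneg hlog (le_max_right _ _))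
  calc Real.log (minorSum 1 (A ω)) ≤ Real.log (d * d * matOpNorm (A ω)) :=
        Real.log_le_log hpos (hle _)
    _ = Real.log (d * d) + Real.log (matOpNorm (A ω)) :=
        Real.log_mul (by positivity) hop.ne'
    _ ≤ _ := add_le_add le_rfl (le_max_left _ _)

theorem exists_ae_tendsto_log_minorSum {μ : Measure Ω} [IsProbabilityMeasure μ]
    (hT : Ergodic T μ) (hd : 0 < d) (hu : ∀ ω, IsUnit (A ω))
    (hA : ∀ i j, Measurable fun ω => A ω i j)
    (hint : Integrable (fun ω => max (Real.log (minorSum 1 (A ω))) 0) μ) {k : ℕ} (hk : k ≤ d) :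
    ∃ l : EReal, l ≠ ⊤ ∧ ∀ᵐ ω ∂μ, Tendsto
      (fun n : ℕ => ((Real.log (minorSum k (cocycIter T A n ω)) / n : ℝ) : EReal)) atTop (𝓝 l) := by
  obtain ⟨C, hC1, hC⟩ := minorSum_le_pow d k
  have hpos : ∀ n ω, 0 < minorSum k (cocycIter T A n ω) := fun n ω =>
    minorSum_pos hk (isUnit_cocycIter hu n ω)
  refine hT.exists_ae_tendsto_subadditive
    (g := fun n ω => Real.log (minorSum k (cocycIter T A n ω)))
    (h := fun ω => Real.log C + k * max (Real.log (minorSum 1 (A ω))) 0)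
    (fun n => Real.measurable_log.comp
      (measurable_minorSum (measurable_cocycIter_apply hT.measurable hA n) k))
    (fun m n ω _ _ => ?_) ?_ ((integrable_const _).add (hint.const_mul _)) (fun ω => ?_) fun ω => ?_
  · rw [cocycIter_add, add_comm, ← Real.log_mul (hpos _ _).ne' (hpos _ _).ne']
    refine Real.log_le_log ?_ (minorSum_mul_le _ _ _)
    rw [← cocycIter_add]
    exact hpos _ _
  · exact (((Real.measurable_log.comp (measurable_minorSum hA 1)).max
      measurable_const).const_mul _).const_add _
  · exact add_nonneg (Real.log_nonneg hC1) (by positivity)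
  · have h1 : 0 < minorSum 1 (A ω) := minorSum_pos hd (hu ω)
    calc Real.log (minorSum k (cocycIter T A 1 ω)) ≤ Real.log (C * minorSum 1 (A ω) ^ k) :=
          Real.log_le_log (hpos _ _) (by rw [cocycIter_one]; exact hC _)
      _ = Real.log C + k * Real.log (minorSum 1 (A ω)) := by
          rw [Real.log_mul (by positivity) (by positivity), Real.log_pow]
      _ ≤ _ := by gcongr; exact le_max_left _ _

end Cocycle

/-- **Reducibility or growth dichotomy.**  Either all nonzero vectors grow at a single
exponential rate `λ ∈ ℝ ∪ {−∞}` (uniformly on the unit sphere for fixed `ω`), or there is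
a measurable family of nontrivial proper invariant subspaces. -/
theorem reducibility_or_growth_dichotomy
    {Ω : Type*} [MeasurableSpace Ω] {μ : Measure Ω} [IsProbabilityMeasure μ]
    {T : Ω → Ω} (hT : Ergodic T μ) {d : ℕ} (hd : 0 < d)
    (A : Ω → Matrix.GeneralLinearGroup (Fin d) ℝ)
    (hAmeas : ∀ i j, Measurable fun ω => (A ω : Matrix (Fin d) (Fin d) ℝ) i j)
    (hint : Integrable (fun ω =>
      max (Real.log (matOpNorm (A ω : Matrix (Fin d) (Fin d) ℝ))) 0) μ) :
    (∃ lam : EReal, lam ≠ ⊤ ∧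
      ∀ᵐ ω ∂μ,
        (∀ v : EuclideanSpace ℝ (Fin d), v ≠ 0 →
          Tendsto
            (fun N : ℕ =>
              ((Real.log ‖Matrix.toEuclideanLin (cocycIter T (fun ω' =>
                  (A ω' : Matrix (Fin d) (Fin d) ℝ)) N ω) v‖ / (N : ℝ) : ℝ) : EReal))
            atTop (𝓝 lam)) ∧
        (∀ U : Set EReal, U ∈ 𝓝 lam →
          ∀ᶠ N : ℕ in atTop, ∀ v : EuclideanSpace ℝ (Fin d), ‖v‖ = 1 →
            ((Real.log ‖Matrix.toEuclideanLin (cocycIter T (fun ω' =>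
                (A ω' : Matrix (Fin d) (Fin d) ℝ)) N ω) v‖ / (N : ℝ) : ℝ) : EReal) ∈ U)) ∨
    (∃ E : Ω → Submodule ℝ (EuclideanSpace ℝ (Fin d)),
      MeasurableSet {p : Ω × EuclideanSpace ℝ (Fin d) | p.2 ∈ E p.1} ∧
      (∀ᵐ ω ∂μ, 0 < Module.finrank ℝ (E ω) ∧ Module.finrank ℝ (E ω) < d) ∧
      (∀ᵐ ω ∂μ,
        (E ω).map (Matrix.toEuclideanLin (A ω : Matrix (Fin d) (Fin d) ℝ)) = E (T ω))) := by
  set A' : Ω → Matrix (Fin d) (Fin d) ℝ := fun ω => (A ω : Matrix (Fin d) (Fin d) ℝ)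
  have hu : ∀ ω, IsUnit (A' ω) := fun ω => (A ω).isUnit
  have hint' := integrable_posPart_log_minorSum_one hd hu hAmeas hint
  have hposm : ∀ {k : ℕ}, k ≤ d → ∀ ω n, 0 < minorSum k (cocycIter T A' n ω) :=
    fun hk ω n => minorSum_pos hk (isUnit_cocycIter hu n ω)
  have hlim : ∀ k, ∃ l : EReal, k ≤ d → l ≠ ⊤ ∧ ∀ᵐ ω ∂μ, Tendsto
      (fun n : ℕ => ((Real.log (minorSum k (cocycIter T A' n ω)) / n : ℝ) : EReal))
      atTop (𝓝 l) := by
    intro k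
    by_cases hk : k ≤ d
    · obtain ⟨l, hl⟩ := exists_ae_tendsto_log_minorSum hT hd hu hAmeas hint' hk
      exact ⟨l, fun _ => hl⟩
    · exact ⟨0, fun h => absurd h hk⟩
  choose L hL using hlim
  obtain ⟨hL1top, hL1⟩ := hL 1 hd
  have hup : ∀ᵐ ω ∂μ, ∀ q : ℝ, L 1 < q →
      ∀ᶠ n : ℕ in atTop, minorSum 1 (cocycIter T A' n ω) ≤ Real.exp (q * n) := by
    filter_upwards [hL1] with ω hω q hq
    exact eventually_le_exp_of_tendsto_log (hposm hd ω) hω hq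
  rcases eq_or_ne (L 1) ⊥ with hbot | hbot
  · refine Or.inl ⟨⊥, bot_ne_top, ?_⟩
    filter_upwards [hup] with ω hω
    exact uniform_growth_of_minorSum (fun n => isUnit_cocycIter hu n ω) (hbot ▸ hω)
      fun q hq => absurd hq not_lt_bot
  obtain ⟨l, hl⟩ : ∃ l : ℝ, L 1 = l := ⟨_, (EReal.coe_toReal hL1top hbot).symm⟩
  rw [hl] at hup hL1
  simp only [EReal.coe_lt_coe_iff] at hup
  have hlow : ∀ k, k + 1 ≤ d → (((k + 1) * l : ℝ) : EReal) ≤ L (k + 1) → ∀ᵐ ω ∂μ, ∀ q : ℝ,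
      q < (k + 1) * l →
      ∀ᶠ n : ℕ in atTop, Real.exp (q * n) ≤ minorSum (k + 1) (cocycIter T A' n ω) := by
    intro k hk hkl
    filter_upwards [(hL (k + 1) hk).2] with ω hω q hq
    exact eventually_exp_le_of_tendsto_log (hposm hk ω) hω
      ((EReal.coe_lt_coe_iff.2 hq).trans_le hkl)
  by_cases hstep : ∀ k : ℕ, k + 1 < d → (((k + 1) * l : ℝ) : EReal) ≤ L (k + 1) →
      (((k + 2) * l : ℝ) : EReal) ≤ L (k + 2)
  · have hall : ∀ k, k + 1 ≤ d → (((k + 1) * l : ℝ) : EReal) ≤ L (k + 1) := by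
      intro k
      induction k with
      | zero => intro _; simp [hl]
      | succ k ih =>
        intro hk
        convert hstep k hk (ih (by omega)) using 3
        push_cast
        ring
    obtain ⟨k, rfl⟩ : ∃ k, d = k + 1 := ⟨d - 1, by omega⟩
    refine Or.inl ⟨l, EReal.coe_ne_top l, ?_⟩
    filter_upwards [hup, hlow k le_rfl (hall k le_rfl)] with ω h1 h2
    exact uniform_growth_of_minorSum (fun n => isUnit_cocycIter hu n ω)
      (fun q hq => h1 q (EReal.coe_lt_coe_iff.1 hq))
      fun q hq => eventually_exp_mul_norm_le_norm_mulVec rfl (fun n => isUnit_cocycIter hu n ω)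
        h1 h2 (EReal.coe_lt_coe_iff.1 hq)
  · push Not at hstep
    obtain ⟨k, hkd, hk1, hk2⟩ := hstep
    obtain ⟨r, hr1, hr2⟩ := EReal.lt_iff_exists_real_btwn.1 hk2
    rw [EReal.coe_lt_coe_iff] at hr2
    obtain ⟨ε, hε, hεr⟩ : ∃ ε > 0, r + 5 * ε = (k + 2) * l :=
      ⟨((k + 2) * l - r) / 5, by linarith, by ring⟩
    refine Or.inr ⟨fun ω => slowSubspace (fun n => cocycIter T A' n ω) (l - ε),
      measurableSet_slowSubspace (B := fun ω n => cocycIter T A' n ω)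
        (fun n => measurable_cocycIter_apply hT.measurable hAmeas n) _, ?_,
      Eventually.of_forall fun ω => map_slowSubspace_cocycIter (hu ω) _⟩
    filter_upwards [hup, hlow k hkd.le hk1, (hL (k + 2) hkd).2, hL1,
      hT.ae_eventually_comp_iterate_le
        ((Real.measurable_log.comp (measurable_minorSum hAmeas 1)).max measurable_const) hint'
        (fun ω => le_max_right _ _) hε] with ω h1 h2 h3 h4 h5
    obtain ⟨u, hu0, hubig⟩ := exists_ne_zero_isBigO_mulVec (B := fun n => cocycIter T A' n ω)
      (D := fun n => A' (T^[n] ω)) (l := l) hε hkd (hposm hkd.le ω)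
      (fun n => cocycIter_succ_eq n ω)
      (by
        filter_upwards [eventually_le_exp_of_tendsto_log (hposm hkd ω) h3 hr1,
          h2 ((k + 1) * l - ε) (by linarith)] with n h6 h7
        calc minorSum (k + 2) (cocycIter T A' n ω) ≤ Real.exp (r * n) := h6
          _ = Real.exp ((l - 4 * ε) * n) * Real.exp (((k + 1) * l - ε) * n) := by
            rw [← Real.exp_add, ← add_mul]
            congr 2
            linarith
          _ ≤ _ := by gcongr)
      (eventually_minorSum_le_exp_mul_minorSum_succ h1 h2 hε)
      (by
        filter_upwards [h5] with n hn
        exact (Real.log_le_iff_le_exp (minorSum_pos hd (hu _))).1 ((le_max_left _ _).trans hn))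
      (h1 (l + ε) (by linarith))
    have hbot := slowSubspace_ne_bot hu0 hubig
    have htop := slowSubspace_ne_top (c := l - ε) (q := l - ε / 2) (by linarith)
      (eventually_exp_le_of_tendsto_log (hposm hd ω) h4
        (EReal.coe_lt_coe_iff.2 (by linarith)))
    refine ⟨Nat.pos_of_ne_zero fun h => hbot (Submodule.finrank_eq_zero.1 h), ?_⟩
    simpa using Submodule.finrank_lt htop
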